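/- arXiv:2206.08351 — 3 statements merged into one kernel-verified Lean document; each statement's English description precedes it below -/
import Mathlib

section
/- For each degree n ≥ 2 there exists a constant C_n > 0 such that every number field K of degree n over ℚ satisfies |Cl_K| ≤ C_n · D_K^{1/2} · (log D_K)^{n-1}. -/
open NumberField

/-!
By Minkowski's theorem every ideal class contains an integral ideal of norm at most `√D_K`, so it
is enough to count the ideals of norm at most `x`. At most `n` primes lie over a given rational
prime; colour the primes of `K` with `n` colours so that primes over the same rational prime get
different colours. Splitting the factorization of an ideal `I` by colour writes `I = I₁ ⋯ Iₙ`, and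
`Iⱼ` is determined by its norm, since all its prime factors lie over different rational primes.
Hence `I ↦ (N I₁, …, N Iₙ)` embeds the ideals of norm at most `x` into the `n`-tuples of positive
integers with product at most `x`, and there are at most `x (1 + log x) ^ (n - 1)` of those.
-/

open Finset Ideal Module UniqueFactorizationMonoid
open scoped Nat nonZeroDivisors

section Tuples

/-- The `k`-tuples of positive integers whose product is at most `N`. Their number is the sum over
`m ≤ N` of the `k`-fold divisor function. -/
def tuplesProdLE (k N : ℕ) : Finset (Fin k → ℕ) :=
  (Icc 1 N).biUnion (Nat.finMulAntidiag k)

theorem mem_tuplesProdLE {k N : ℕ} {a : Fin k → ℕ} :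
    a ∈ tuplesProdLE k N ↔ ∏ i, a i ≠ 0 ∧ ∏ i, a i ≤ N := by
  simp only [tuplesProdLE, mem_biUnion, mem_Icc, Nat.mem_finMulAntidiag]
  grind

theorem apply_mem_Icc_of_mem_tuplesProdLE {k N : ℕ} {a : Fin k → ℕ} (ha : a ∈ tuplesProdLE k N)
    (i : Fin k) : a i ∈ Icc 1 N := by
  obtain ⟨prod_ne_zero, prod_le⟩ := mem_tuplesProdLE.mp ha
  have apply_dvd : a i ∣ ∏ i, a i := dvd_prod_of_mem a (mem_univ i)
  exact mem_Icc.mpr ⟨Nat.pos_of_dvd_of_pos apply_dvd (Nat.pos_of_ne_zero prod_ne_zero),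
    (Nat.le_of_dvd (Nat.pos_of_ne_zero prod_ne_zero) apply_dvd).trans prod_le⟩

theorem card_tuplesProdLE_succ_le_sum_div (k N : ℕ) :
    #(tuplesProdLE (k + 1) N) ≤
      ∑ b ∈ Fintype.piFinset fun _ : Fin k ↦ Icc 1 N, N / ∏ i, b i := by
  calc #(tuplesProdLE (k + 1) N)
      ≤ #((Fintype.piFinset fun _ : Fin k ↦ Icc 1 N).sigma fun b ↦ Icc 1 (N / ∏ i, b i)) := by
        refine card_le_card_of_injOn (fun a ↦ ⟨Fin.tail a, a 0⟩) (fun a ha ↦ ?_)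
          fun a _ b _ hab ↦ ?_
        · have apply_mem := apply_mem_Icc_of_mem_tuplesProdLE ha
          have tail_pos : 0 < ∏ i, Fin.tail a i :=
            prod_pos fun i _ ↦ (mem_Icc.mp (apply_mem i.succ)).1
          have prod_le := (mem_tuplesProdLE.mp ha).2
          rw [Fin.prod_univ_succ] at prod_le
          exact mem_sigma.mpr ⟨Fintype.mem_piFinset.mpr fun i ↦ apply_mem i.succ,
            mem_Icc.mpr ⟨(mem_Icc.mp (apply_mem 0)).1,
              (Nat.le_div_iff_mul_le tail_pos).mpr prod_le⟩⟩
        · obtain ⟨tail_eq, head_eq⟩ := Sigma.mk.inj_iff.mp hab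
          rw [← Fin.cons_self_tail a, ← Fin.cons_self_tail b, tail_eq, eq_of_heq head_eq]
    _ = ∑ b ∈ Fintype.piFinset fun _ : Fin k ↦ Icc 1 N, N / ∏ i, b i := by
        simp only [card_sigma, Nat.card_Icc, Nat.add_sub_cancel]

theorem card_tuplesProdLE_succ_le_mul_harmonic_pow (k N : ℕ) :
    (#(tuplesProdLE (k + 1) N) : ℚ) ≤ N * harmonic N ^ k := by
  calc (#(tuplesProdLE (k + 1) N) : ℚ)
      ≤ ∑ b ∈ Fintype.piFinset fun _ : Fin k ↦ Icc 1 N, ((N / ∏ i, b i : ℕ) : ℚ) := by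
        exact_mod_cast card_tuplesProdLE_succ_le_sum_div k N
    _ ≤ ∑ b ∈ Fintype.piFinset fun _ : Fin k ↦ Icc 1 N, N * ∏ i, (b i : ℚ)⁻¹ := by
        refine sum_le_sum fun b _ ↦ Nat.cast_div_le.trans_eq ?_
        rw [prod_inv_distrib, ← div_eq_mul_inv, Nat.cast_prod]
    _ = N * harmonic N ^ k := by
        rw [← mul_sum, harmonic_eq_sum_Icc, sum_pow']

theorem card_tuplesProdLE_succ_le_mul_log_pow (k N : ℕ) :
    (#(tuplesProdLE (k + 1) N) : ℝ) ≤ N * (1 + Real.log N) ^ k := by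
  have harmonic_nonneg : (0 : ℝ) ≤ harmonic N := by
    exact_mod_cast sum_nonneg fun i _ ↦ by positivity
  calc (#(tuplesProdLE (k + 1) N) : ℝ)
      ≤ N * (harmonic N : ℝ) ^ k := by
        exact_mod_cast card_tuplesProdLE_succ_le_mul_harmonic_pow k N
    _ ≤ N * (1 + Real.log N) ^ k := by
        gcongr
        exact harmonic_le_one_add_log N

end Tuples

section Coloring

variable (R S : Type*) [CommRing R] [IsDomain R] [CommRing S] [Algebra R S] [Module.Finite R S]
  [Module.Flat R S]

theorem encard_primesOver_le_finrank (p : Ideal R) [p.IsPrime] :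
    (p.primesOver S).encard ≤ finrank R S := by
  have : Fintype (p.primesOver S) := (Algebra.QuasiFinite.finite_primesOver p).fintype
  rw [Set.encard_eq_coe_toFinset_card, Set.toFinset_card, ← sum_ramification_inertia_eq_finrank p S,
    Nat.cast_le, Fintype.card, card_eq_sum_ones]
  refine sum_le_sum fun P _ ↦ ?_
  have : P.1.IsPrime := P.2.1
  exact Nat.mul_pos (P.1.ramificationIdx_pos R) (P.1.inertiaDeg_pos R)

theorem exists_coloring_injOn_primesOver [Nontrivial S] :
    ∃ c : Ideal S → Fin (finrank R S), ∀ p : Ideal R, Set.InjOn c (p.primesOver S) := by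
  have : NeZero (finrank R S) := ⟨Module.finrank_pos.ne'⟩
  have exists_injOn (p : Ideal R) :
      ∃ c : Ideal S → Fin (finrank R S), Set.InjOn c (p.primesOver S) := by
    by_cases hp : p.IsPrime
    · obtain ⟨c, -, c_injOn⟩ := (Algebra.QuasiFinite.finite_primesOver p).exists_injOn_of_encard_le
        (t := Set.univ (α := Fin (finrank R S))) (by simpa using encard_primesOver_le_finrank R S p)
      exact ⟨c, c_injOn⟩
    · refine ⟨0, fun P hP ↦ (hp ?_).elim⟩
      have := hP.1
      exact hP.2.over ▸ inferInstance
  choose c c_injOn using exists_injOn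
  refine ⟨fun P ↦ c (P.under R) P, fun p P hP Q hQ hPQ ↦ c_injOn p hP hQ ?_⟩
  simpa only [← hP.2.over, ← hQ.2.over] using hPQ

end Coloring

section ColorPart

theorem prod_prod_filter_eq_prod {ι M : Type*} [Fintype ι] [DecidableEq ι] [CommMonoid M]
    (c : M → ι) (s : Multiset M) : ∏ j, (s.filter (c · = j)).prod = s.prod := by
  induction s using Multiset.induction_on with
  | empty => simp
  | cons a s ih =>
    simp only [Multiset.filter_cons, Multiset.prod_add, prod_mul_distrib, ih, Multiset.prod_cons,
      apply_ite Multiset.prod, Multiset.prod_singleton, Multiset.prod_zero, prod_ite_eq, mem_univ,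
      if_true]

variable {S ι : Type*} [CommRing S] [IsDedekindDomain S] [DecidableEq ι]

/-- The largest divisor of `I` all of whose prime factors have colour `j`. For `I = ⊥` it is `⊤`. -/
noncomputable def colorPart (c : Ideal S → ι) (I : Ideal S) (j : ι) : Ideal S :=
  ((normalizedFactors I).filter (c · = j)).prod

theorem prod_colorPart [Fintype ι] (c : Ideal S → ι) {I : Ideal S} (hI : I ≠ ⊥) :
    ∏ j, colorPart c I j = I :=
  (prod_prod_filter_eq_prod c _).trans (Ideal.prod_normalizedFactors_eq_self hI)

theorem colorPart_ne_bot (c : Ideal S → ι) (I : Ideal S) (j : ι) : colorPart c I j ≠ ⊥ :=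
  Multiset.prod_ne_zero fun h ↦ zero_notMem_normalizedFactors I (Multiset.mem_of_mem_filter h)

theorem color_eq_of_prime_dvd_colorPart {c : Ideal S → ι} {I P : Ideal S} {j : ι} (hP : Prime P)
    (hdvd : P ∣ colorPart c I j) : c P = j := by
  obtain ⟨Q, Q_mem, P_dvd_Q⟩ := hP.exists_mem_multiset_dvd hdvd
  have Q_prime : Prime Q := prime_of_normalized_factor Q (Multiset.mem_of_mem_filter Q_mem)
  obtain rfl : P = Q := associated_iff_eq.mp (hP.associated_of_dvd Q_prime P_dvd_Q)
  exact Multiset.of_mem_filter (p := (c · = j)) Q_mem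

end ColorPart

section CountIdeals

variable {S : Type*} [CommRing S] [IsDedekindDomain S] [Module.Free ℤ S] [Module.Finite ℤ S]

theorem eq_of_absNorm_eq_of_injOn_under {T : Set (Ideal S)} (hT : T.InjOn (under ℤ))
    {I J : Ideal S} (hI : I ≠ ⊥) (hJ : J ≠ ⊥) (hIT : ∀ P, Prime P → P ∣ I → P ∈ T)
    (hJT : ∀ P, Prime P → P ∣ J → P ∈ T) (hIJ : absNorm I = absNorm J) : I = J := by
  induction I using induction_on_prime generalizing J with
  | h₁ => exact (hI rfl).elim
  | h₂ I I_isUnit =>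
    obtain rfl : I = ⊤ := Ideal.isUnit_iff.mp I_isUnit
    rw [absNorm_top, eq_comm, absNorm_eq_one_iff] at hIJ
    exact hIJ.symm
  | h₃ I P I_ne_bot P_prime ih =>
    have := isPrime_of_prime P_prime
    have : NeZero P := ⟨P_prime.ne_zero⟩
    have p_prime : (absNorm (P.under ℤ)).Prime := Nat.absNorm_under_prime P
    have p_dvd : absNorm (P.under ℤ) ∣ absNorm J := by
      rw [← hIJ, map_mul]
      exact (Int.absNorm_under_dvd_absNorm P).mul_right _
    obtain ⟨Q, Q_max, Q_under, Q_dvd⟩ := exists_isMaximal_dvd_of_dvd_absNorm' p_prime J p_dvd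
    have Q_prime : Prime Q := prime_of_isPrime (ne_zero_of_dvd_ne_zero hJ Q_dvd) Q_max.isPrime
    have Q_eq : Q = P := hT (hJT Q Q_prime Q_dvd) (hIT P P_prime (dvd_mul_right P I)) <| by
      rw [Q_under, Int.ideal_span_absNorm_eq_self]
    obtain ⟨J', rfl⟩ := Q_eq ▸ Q_dvd
    rw [map_mul, map_mul, mul_right_inj' (absNorm_eq_zero_iff.not.mpr P_prime.ne_zero)] at hIJ
    rw [ih I_ne_bot (right_ne_zero_of_mul hJ) (fun Q hQ h ↦ hIT Q hQ (h.mul_left P))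
      (fun Q hQ h ↦ hJT Q hQ (h.mul_left P)) hIJ]

theorem eq_of_absNorm_colorPart_eq {ι : Type*} [Finite ι] [DecidableEq ι] {c : Ideal S → ι}
    (hc : ∀ p : Ideal ℤ, Set.InjOn c (p.primesOver S)) {I J : Ideal S} (hI : I ≠ ⊥) (hJ : J ≠ ⊥)
    (hIJ : ∀ j, absNorm (colorPart c I j) = absNorm (colorPart c J j)) : I = J := by
  have := Fintype.ofFinite ι
  rw [← prod_colorPart c hI, ← prod_colorPart c hJ]
  refine prod_congr rfl fun j _ ↦ ?_
  have under_injOn : {P : Ideal S | P.IsPrime ∧ c P = j}.InjOn (under ℤ) :=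
    fun P hP Q hQ hPQ ↦ hc (P.under ℤ) ⟨hP.1, ⟨rfl⟩⟩ ⟨hQ.1, ⟨hPQ⟩⟩ (hP.2.trans hQ.2.symm)
  exact eq_of_absNorm_eq_of_injOn_under under_injOn (colorPart_ne_bot c I j)
    (colorPart_ne_bot c J j)
    (fun P hP hdvd ↦ ⟨isPrime_of_prime hP, color_eq_of_prime_dvd_colorPart hP hdvd⟩)
    (fun P hP hdvd ↦ ⟨isPrime_of_prime hP, color_eq_of_prime_dvd_colorPart hP hdvd⟩) (hIJ j)

variable (S)

theorem card_ideals_absNorm_le_le_card_tuplesProdLE (N : ℕ) :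
    Nat.card {I : (Ideal S)⁰ // absNorm (I : Ideal S) ≤ N} ≤ #(tuplesProdLE (finrank ℤ S) N) := by
  obtain ⟨c, hc⟩ := exists_coloring_injOn_primesOver ℤ S
  have norms_mem (I : {I : (Ideal S)⁰ // absNorm (I : Ideal S) ≤ N}) :
      (fun j ↦ absNorm (colorPart c I.1 j)) ∈ tuplesProdLE (finrank ℤ S) N := by
    rw [mem_tuplesProdLE, ← map_prod, prod_colorPart c (nonZeroDivisors.coe_ne_zero I.1)]
    exact ⟨absNorm_ne_zero_of_nonZeroDivisors I.1, I.2⟩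
  rw [← Fintype.card_coe, ← Nat.card_eq_fintype_card]
  refine Nat.card_le_card_of_injective (fun I ↦ ⟨_, norms_mem I⟩) fun I J hIJ ↦ ?_
  refine Subtype.ext (Subtype.ext (eq_of_absNorm_colorPart_eq hc
    (nonZeroDivisors.coe_ne_zero _) (nonZeroDivisors.coe_ne_zero _) ?_))
  exact congrFun (Subtype.ext_iff.mp hIJ)

theorem card_ideals_absNorm_le_le_mul_log_pow {x : ℝ} (hx : 1 ≤ x) :
    (Nat.card {I : (Ideal S)⁰ // (absNorm (I : Ideal S) : ℝ) ≤ x} : ℝ) ≤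
      x * (1 + Real.log x) ^ (finrank ℤ S - 1) := by
  have floor_pos : 0 < ⌊x⌋₊ := Nat.floor_pos.mpr hx
  have floor_le : (⌊x⌋₊ : ℝ) ≤ x := Nat.floor_le (zero_le_one.trans hx)
  obtain ⟨k, hk⟩ : ∃ k, finrank ℤ S = k + 1 := Nat.exists_eq_succ_of_ne_zero finrank_pos.ne'
  calc (Nat.card {I : (Ideal S)⁰ // (absNorm (I : Ideal S) : ℝ) ≤ x} : ℝ)
      = Nat.card {I : (Ideal S)⁰ // absNorm (I : Ideal S) ≤ ⌊x⌋₊} := by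
        simp only [Nat.le_floor_iff (zero_le_one.trans hx)]
    _ ≤ #(tuplesProdLE (k + 1) ⌊x⌋₊) := by
        exact_mod_cast hk ▸ card_ideals_absNorm_le_le_card_tuplesProdLE S ⌊x⌋₊
    _ ≤ ⌊x⌋₊ * (1 + Real.log ⌊x⌋₊) ^ k := card_tuplesProdLE_succ_le_mul_log_pow k ⌊x⌋₊
    _ ≤ x * (1 + Real.log x) ^ (finrank ℤ S - 1) := by
        rw [hk, Nat.add_sub_cancel]
        gcongr

end CountIdeals

section Minkowski

theorem two_mul_self_pow_le_succ_pow {n : ℕ} (hn : n ≠ 0) : 2 * n ^ n ≤ (n + 1) ^ n := by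
  calc 2 * n ^ n = n ^ n + n * n ^ (n - 1) * 1 := by
        rw [← pow_succ', Nat.sub_one_add_one hn]
        ring
    _ ≤ (n + 1) ^ n := pow_add_mul_le_add_pow (Nat.zero_le n) (Nat.zero_le _) n

theorem two_pow_pred_mul_factorial_le_self_pow (n : ℕ) : 2 ^ (n - 1) * n ! ≤ n ^ n := by
  induction n with
  | zero => simp
  | succ n ih =>
    obtain rfl | n_ne_zero := eq_or_ne n 0
    · simp
    calc 2 ^ n * (n + 1)! = (n + 1) * (2 * (2 ^ (n - 1) * n !)) := by
          rw [← mul_assoc 2, ← pow_succ', Nat.sub_one_add_one n_ne_zero, Nat.factorial_succ]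
          ring
      _ ≤ (n + 1) * (2 * n ^ n) := by gcongr
      _ ≤ (n + 1) * (n + 1) ^ n := by
          gcongr
          exact two_mul_self_pow_le_succ_pow n_ne_zero
      _ = (n + 1) ^ (n + 1) := (pow_succ' _ _).symm

theorem four_div_pi_pow_mul_factorial_div_self_pow_le_one {r n : ℕ} (hr : 2 * r ≤ n) :
    (4 / Real.pi) ^ r * (n ! / n ^ n : ℝ) ≤ 1 := by
  have four_div_pi_le : 4 / Real.pi ≤ 2 := by
    rw [div_le_iff₀ Real.pi_pos]
    linarith [Real.pi_gt_three]
  have two_pow_mul_factorial_le : (2 : ℝ) ^ r * n ! ≤ n ^ n := by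
    have : 2 ^ r * n ! ≤ 2 ^ (n - 1) * n ! := by
      gcongr
      · norm_num
      · omega
    exact_mod_cast this.trans (two_pow_pred_mul_factorial_le_self_pow n)
  calc (4 / Real.pi) ^ r * (n ! / n ^ n : ℝ)
      ≤ 2 ^ r * (n ! / n ^ n : ℝ) := by gcongr
    _ = 2 ^ r * n ! / n ^ n := by rw [mul_div_assoc]
    _ ≤ 1 := div_le_one_of_le₀ two_pow_mul_factorial_le (by positivity)

variable {K : Type*} [Field K] [NumberField K]

theorem exists_ideal_in_class_absNorm_le_sqrt_discr (C : ClassGroup (𝓞 K)) :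
    ∃ I : (Ideal (𝓞 K))⁰, ClassGroup.mk0 I = C ∧
      (absNorm (I : Ideal (𝓞 K)) : ℝ) ≤ √(discr K).natAbs := by
  obtain ⟨I, hI, norm_le⟩ := exists_ideal_in_class_of_norm_le C
  refine ⟨I, hI, norm_le.trans ?_⟩
  have two_mul_nrComplexPlaces_le : 2 * InfinitePlace.nrComplexPlaces K ≤ finrank ℚ K :=
    (Nat.le_add_left _ _).trans_eq (InfinitePlace.card_add_two_mul_card_eq_rank K)
  rw [← mul_assoc, Nat.cast_natAbs, Int.cast_abs]
  exact mul_le_of_le_one_left (Real.sqrt_nonneg _)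
    (four_div_pi_pow_mul_factorial_div_self_pow_le_one two_mul_nrComplexPlaces_le)

variable (K)

theorem classNumber_le_card_ideals_absNorm_le_sqrt_discr :
    classNumber K ≤
      Nat.card {I : (Ideal (𝓞 K))⁰ // (absNorm (I : Ideal (𝓞 K)) : ℝ) ≤ √(discr K).natAbs} := by
  have : Finite {I : (Ideal (𝓞 K))⁰ // (absNorm (I : Ideal (𝓞 K)) : ℝ) ≤ √(discr K).natAbs} := by
    simp only [← Nat.le_floor_iff (Real.sqrt_nonneg _)]
    exact finite_setOfPred_absNorm_le₀ _
  rw [classNumber, ← Nat.card_eq_fintype_card]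
  refine Nat.card_le_card_of_surjective (fun I ↦ ClassGroup.mk0 I.1) fun C ↦ ?_
  obtain ⟨I, hI, norm_le⟩ := exists_ideal_in_class_absNorm_le_sqrt_discr C
  exact ⟨⟨I, norm_le⟩, hI⟩

theorem one_le_log_natAbs_discr (hK : 1 < finrank ℚ K) :
    1 ≤ Real.log (discr K).natAbs := by
  have three_le : 3 ≤ (discr K).natAbs := by
    have := abs_discr_gt_two hK
    rw [Int.abs_eq_natAbs] at this
    omega
  have three_le' : (3 : ℝ) ≤ (discr K).natAbs := by exact_mod_cast three_le
  rw [Real.le_log_iff_exp_le (by linarith)]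
  linarith [Real.exp_one_lt_three]

theorem classNumber_le_sqrt_discr_mul_log_pow (hK : 1 < finrank ℚ K) :
    (classNumber K : ℝ) ≤
      √(discr K).natAbs * (3 / 2 * Real.log (discr K).natAbs) ^ (finrank ℚ K - 1) := by
  have one_le_log := one_le_log_natAbs_discr K hK
  have one_le_discr : (1 : ℝ) ≤ (discr K).natAbs := by
    exact_mod_cast Nat.one_le_iff_ne_zero.mpr (Int.natAbs_ne_zero.mpr (discr_ne_zero K))
  have one_add_log_sqrt_le :
      1 + Real.log √(discr K).natAbs ≤ 3 / 2 * Real.log (discr K).natAbs := by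
    rw [Real.log_sqrt (Nat.cast_nonneg _)]
    linarith
  have log_sqrt_nonneg : 0 ≤ Real.log √(discr K).natAbs :=
    Real.log_nonneg (Real.one_le_sqrt.mpr one_le_discr)
  calc (classNumber K : ℝ)
      ≤ Nat.card {I : (Ideal (𝓞 K))⁰ //
          (absNorm (I : Ideal (𝓞 K)) : ℝ) ≤ √(discr K).natAbs} := by
        exact_mod_cast classNumber_le_card_ideals_absNorm_le_sqrt_discr K
    _ ≤ √(discr K).natAbs * (1 + Real.log √(discr K).natAbs) ^ (finrank ℤ (𝓞 K) - 1) :=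
        card_ideals_absNorm_le_le_mul_log_pow (𝓞 K) (Real.one_le_sqrt.mpr one_le_discr)
    _ ≤ √(discr K).natAbs * (3 / 2 * Real.log (discr K).natAbs) ^ (finrank ℚ K - 1) := by
        rw [RingOfIntegers.rank]
        gcongr

end Minkowski

/-- **Landau/Minkowski bound.** For each degree `n ≥ 2` there exists a constant `C > 0`
such that every number field `K` of degree `n` over `ℚ` satisfies
`|Cl_K| ≤ C · D_K^{1/2} · (log D_K)^{n-1}`. -/
theorem class_number_landau_bound (n : ℕ) (hn : 2 ≤ n) :
    ∃ C : ℝ, 0 < C ∧ ∀ (K : Type*) [Field K] [NumberField K],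
      Module.finrank ℚ K = n →
      (NumberField.classNumber K : ℝ) ≤
        C * ((NumberField.discr K).natAbs : ℝ) ^ ((1 : ℝ) / 2) *
          (Real.log ((NumberField.discr K).natAbs : ℝ)) ^ (n - 1) := by
  refine ⟨(3 / 2) ^ (n - 1), by positivity, fun K _ _ hK ↦ ?_⟩
  refine (classNumber_le_sqrt_discr_mul_log_pow K (hK ▸ hn)).trans_eq ?_
  rw [hK, mul_pow, Real.sqrt_eq_rpow]
  ring
end

section
/- Let d > 3 be a squarefree integer, K = ℚ(√−d), and ℓ an odd prime. Suppose p₁, …, p_M are distinct rational primes such that for each j: p_j does not divide 2d, p_j splits in K (i.e. p_j𝒪_K is a product of two distinct prime ideals), and p_j < (1/4)·d^{1/(2ℓ)}. Then M · |Cl_K[ℓ]| ≤ |Cl_K|. -/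
open NumberField IntermediateField

/-- The imaginary quadratic field `ℚ(√-d)`, realized inside `ℂ` by adjoining
`i·√d` to `ℚ`. -/
noncomputable def Qneg (d : ℕ) : IntermediateField ℚ ℂ :=
  ℚ⟮(Complex.I * (Real.sqrt d : ℂ) : ℂ)⟯

open scoped nonZeroDivisors

/-!
If `f : ι → G` has pairwise distinct `ℓ`-th powers in a finite abelian group, then `|ι|` is at most
the order `|G| / |G[ℓ]|` of the image of the `ℓ`-power map. Here `f i` is the class of an ideal
`Iᵢ` of small squarefree norm `nᵢ`. If `[Iᵢ]^ℓ = [Iⱼ]^ℓ`, then `(Iᵢ * conj Iⱼ)^ℓ` is a principal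
ideal `(z)`, with `4 N(z) = a² + d b²` for integers `a`, `b`. Its norm `(nᵢ nⱼ)^ℓ` is below `d / 4`,
so `b = 0` and `(nᵢ nⱼ)^ℓ` is a perfect square. As `ℓ` is odd, `nᵢ nⱼ` is a square too, hence
`nᵢ = nⱼ`.
-/

theorem card_mul_card_pow_eq_one_le {G ι : Type*} [CommGroup G] [Finite G] {k : ℕ} {f : ι → G}
    (hf : Function.Injective fun i ↦ f i ^ k) :
    Nat.card ι * Nat.card {g : G // g ^ k = 1} ≤ Nat.card G := by
  have card_le_range : Nat.card ι ≤ Nat.card (powMonoidHom k : G →* G).range :=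
    Nat.card_le_card_of_injective (fun i ↦ ⟨f i ^ k, f i, rfl⟩)
      fun _ _ h ↦ hf (congrArg Subtype.val h)
  calc Nat.card ι * Nat.card {g : G // g ^ k = 1}
      ≤ Nat.card (powMonoidHom k : G →* G).range * Nat.card (powMonoidHom k : G →* G).ker :=
        Nat.mul_le_mul_right _ card_le_range
    _ = Nat.card G := by
        rw [← Subgroup.index_ker, Subgroup.index_mul_card]

theorem eq_of_squarefree_of_isSquare_mul {m n : ℕ} (hm : Squarefree m) (hn : Squarefree n)
    (h : IsSquare (m * n)) : m = n := by
  have dvd_of_isSquare {a b : ℕ} (ha : Squarefree a) (hab : IsSquare (a * b)) : a ∣ b := by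
    obtain ⟨c, hc⟩ := (isSquare_iff_exists_sq _).mp hab
    obtain ⟨k, rfl⟩ : a ∣ c := (ha.dvd_pow_iff_dvd two_ne_zero).mp (hc ▸ Dvd.intro b rfl)
    refine ⟨k ^ 2, Nat.eq_of_mul_eq_mul_left (Nat.pos_of_ne_zero ha.ne_zero) ?_⟩
    rw [hc]
    ring
  exact dvd_antisymm (dvd_of_isSquare hm h) (dvd_of_isSquare hn (mul_comm m n ▸ h))

theorem isSquare_of_isSquare_sq_mul {a n : ℕ} (ha : a ≠ 0) (h : IsSquare (a ^ 2 * n)) :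
    IsSquare n := by
  obtain ⟨b, hb⟩ := (isSquare_iff_exists_sq _).mp h
  obtain ⟨c, rfl⟩ : a ∣ b := (Nat.pow_dvd_pow_iff two_ne_zero).mp (hb ▸ Dvd.intro n rfl)
  refine (isSquare_iff_exists_sq _).mpr
    ⟨c, Nat.eq_of_mul_eq_mul_left (pow_pos (Nat.pos_of_ne_zero ha) 2) ?_⟩
  rw [hb, mul_pow]

theorem isSquare_of_isSquare_pow {n k : ℕ} (hk : Odd k) (h : IsSquare (n ^ k)) : IsSquare n := by
  rcases eq_or_ne n 0 with rfl | hn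
  · exact IsSquare.zero
  obtain ⟨m, rfl⟩ := hk
  refine isSquare_of_isSquare_sq_mul (pow_ne_zero m hn) ?_
  rwa [← pow_mul, mul_comm m, ← pow_succ]

theorem four_mul_pow_lt_of_lt_quarter_rpow {d n k : ℕ} (hk : k ≠ 0)
    (h : (n : ℝ) < 1 / 4 * (d : ℝ) ^ (1 / k : ℝ)) : 4 * n ^ k < d := by
  have root_pow : ((d : ℝ) ^ (1 / k : ℝ)) ^ k = d := by
    rw [one_div, Real.rpow_inv_natCast_pow d.cast_nonneg hk]
  have quarter_pow_le : (1 / 4 : ℝ) ^ k ≤ 1 / 4 := pow_le_of_le_one (by norm_num) (by norm_num) hk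
  suffices (4 * n ^ k : ℝ) < d from mod_cast this
  calc (4 * n ^ k : ℝ)
      < 4 * (1 / 4 * (d : ℝ) ^ (1 / k : ℝ)) ^ k := by gcongr
    _ = 4 * (1 / 4) ^ k * d := by rw [mul_pow, root_pow, mul_assoc]
    _ ≤ 4 * (1 / 4) * d := by gcongr
    _ = d := by ring

theorem isIntegral_of_isIntegral_squarefree_mul_sq {R K : Type*} [CommRing R] [IsDomain R]
    [UniqueFactorizationMonoid R] [Field K] [Algebra R K] [IsFractionRing R K] {a : R}
    (ha : Squarefree a) {y : K} (h : IsIntegral R (algebraMap R K a * y ^ 2)) :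
    IsIntegral R y := by
  have sq_integral : IsIntegral R ((algebraMap R K a * y) ^ 2) := by
    convert! (isIntegral_algebraMap (x := a)).mul h using 1
    ring
  obtain ⟨m, hm⟩ := IsIntegrallyClosed.isIntegral_iff.mp h
  obtain ⟨n, hn⟩ := IsIntegrallyClosed.isIntegral_iff.mp (sq_integral.of_pow two_pos)
  have sq_eq : n ^ 2 = a * m := IsFractionRing.injective R K <| by
    rw [map_pow, map_mul, hn, hm]
    ring
  obtain ⟨b, rfl⟩ : a ∣ n := (ha.dvd_pow_iff_dvd two_ne_zero).mp (sq_eq ▸ Dvd.intro m rfl)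
  have ha0 : algebraMap R K a ≠ 0 :=
    (map_ne_zero_iff _ (IsFractionRing.injective R K)).mpr ha.ne_zero
  rw [map_mul] at hn
  exact mul_left_cancel₀ ha0 hn ▸ isIntegral_algebraMap

theorem exists_int_two_mul_re_two_mul_im {D : ℤ} (hD : Squarefree D)
    {z : QuadraticAlgebra ℚ D 0} (hz : IsIntegral ℤ z) :
    ∃ a b : ℤ, 2 * z.re = a ∧ 2 * z.im = b := by
  have isIntegral_star : IsIntegral ℤ (star z) := hz.map (starRingEnd _).toIntAlgHom
  have of_algebraMap {q : ℚ} (hq : IsIntegral ℤ (algebraMap ℚ (QuadraticAlgebra ℚ D 0) q)) :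
      IsIntegral ℤ q :=
    (isIntegral_algebraMap_iff QuadraticAlgebra.algebraMap_injective).mp hq
  have isIntegral_trace : IsIntegral ℤ z.trace :=
    of_algebraMap <| by
      simpa only [QuadraticAlgebra.algebraMap_trace_eq_add_star] using hz.add isIntegral_star
  have isIntegral_norm : IsIntegral ℤ z.norm :=
    of_algebraMap <| by
      simpa only [QuadraticAlgebra.algebraMap_norm_eq_mul_star] using hz.mul isIntegral_star
  have isIntegral_two_mul_im : IsIntegral ℤ (2 * z.im) := by
    refine isIntegral_of_isIntegral_squarefree_mul_sq hD ?_
    have isIntegral_four : IsIntegral ℤ (4 : ℚ) := isIntegral_algebraMap (x := (4 : ℤ))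
    convert! (isIntegral_trace.pow 2).sub (isIntegral_four.mul isIntegral_norm) using 1
    simp only [QuadraticAlgebra.trace_def, QuadraticAlgebra.norm_def, eq_intCast]
    ring
  obtain ⟨a, ha⟩ := IsIntegrallyClosed.isIntegral_iff.mp isIntegral_trace
  obtain ⟨b, hb⟩ := IsIntegrallyClosed.isIntegral_iff.mp isIntegral_two_mul_im
  exact ⟨a, b, by simpa [QuadraticAlgebra.trace_def] using ha.symm, by simpa using hb.symm⟩

theorem algebraNorm_quadraticAlgebra {R : Type*} [CommRing R] {a b : R}
    (z : QuadraticAlgebra R a b) : Algebra.norm R z = z.norm :=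
  QuadraticAlgebra.det_toLinearMap_eq_norm z

section NumberField

variable {K : Type*} [Field K] [NumberField K]

theorem exists_mk0_eq_inv_and_absNorm_mul_eq (I : (Ideal (𝓞 K))⁰) :
    ∃ J : (Ideal (𝓞 K))⁰, ClassGroup.mk0 J = (ClassGroup.mk0 I)⁻¹ ∧
      Ideal.absNorm (I : Ideal (𝓞 K)) * Ideal.absNorm (J : Ideal (𝓞 K)) =
        Ideal.absNorm (I : Ideal (𝓞 K)) ^ Module.finrank ℚ K := by
  set n := Ideal.absNorm (I : Ideal (𝓞 K)) with hn_def
  have hn : (n : 𝓞 K) ≠ 0 := Nat.cast_ne_zero.mpr (Ideal.absNorm_ne_zero_of_nonZeroDivisors I)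
  obtain ⟨J, hJ⟩ : (I : Ideal (𝓞 K)) ∣ Ideal.span {(n : 𝓞 K)} :=
    Ideal.dvd_span_singleton.mpr (Ideal.absNorm_mem _)
  have hJ0 : J ≠ 0 := by
    rintro rfl
    rw [mul_zero, Ideal.zero_eq_bot, Ideal.span_singleton_eq_bot] at hJ
    exact hn hJ
  refine ⟨⟨J, mem_nonZeroDivisors_of_ne_zero hJ0⟩,
    ClassGroup.mk0_eq_mk0_inv_iff.mpr ⟨n, hn, by rw [mul_comm, hJ]⟩, ?_⟩
  rw [hn_def, ← map_mul, ← hJ, Ideal.absNorm_span_natCast, RingOfIntegers.rank]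

theorem absNorm_eq_of_span_natCast_eq_mul {p : ℕ} (hp : p.Prime)
    (hK : Module.finrank ℚ K = 2) {P Q : Ideal (𝓞 K)} (hP : P.IsPrime) (hQ : Q.IsPrime)
    (h : Ideal.span {(p : 𝓞 K)} = P * Q) : Ideal.absNorm P = p := by
  have mul_eq_sq : Ideal.absNorm P * Ideal.absNorm Q = p ^ 2 := by
    rw [← map_mul, ← h, Ideal.absNorm_span_natCast, RingOfIntegers.rank, hK]
  exact ((hp.mul_eq_prime_sq_iff (Ideal.absNorm_eq_one_iff.not.mpr hP.ne_top)
    (Ideal.absNorm_eq_one_iff.not.mpr hQ.ne_top)).mp mul_eq_sq).1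

variable {D : ℤ}

theorem finrank_eq_two_of_ringEquiv_quadraticAlgebra (e : K ≃+* QuadraticAlgebra ℚ D 0) :
    Module.finrank ℚ K = 2 :=
  e.toRatAlgEquiv.toLinearEquiv.finrank_eq.trans (QuadraticAlgebra.finrank_eq_two _ _)

theorem exists_four_mul_norm_eq_sq_sub_mul_sq (e : K ≃+* QuadraticAlgebra ℚ D 0)
    (hD : Squarefree D) (z : 𝓞 K) :
    ∃ a b : ℤ, 4 * Algebra.norm ℤ z = a ^ 2 - D * b ^ 2 := by
  obtain ⟨a, b, ha, hb⟩ := exists_int_two_mul_re_two_mul_im hD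
    ((RingOfIntegers.isIntegral_coe z).map e.toRingHom.toIntAlgHom)
  have norm_eq : (Algebra.norm ℤ z : ℚ) = (e z).norm := by
    rw [Algebra.coe_norm_int, ← algebraNorm_quadraticAlgebra,
      ← Algebra.norm_eq_of_algEquiv e.toRatAlgEquiv, RingEquiv.coe_toRatAlgEquiv]
  refine ⟨a, b, ?_⟩
  suffices (4 * Algebra.norm ℤ z : ℚ) = a ^ 2 - D * b ^ 2 from mod_cast this
  calc (4 * Algebra.norm ℤ z : ℚ)
      = (2 * (e z).re) ^ 2 - D * (2 * (e z).im) ^ 2 := by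
        rw [norm_eq, QuadraticAlgebra.norm_def]
        ring
    _ = a ^ 2 - D * b ^ 2 := congrArg₂ (fun x y : ℚ ↦ x ^ 2 - D * y ^ 2) ha hb

theorem isSquare_absNorm_of_isPrincipal_of_lt (e : K ≃+* QuadraticAlgebra ℚ D 0)
    (hD : Squarefree D) {I : Ideal (𝓞 K)} (hI : I.IsPrincipal)
    (hlt : 4 * (Ideal.absNorm I : ℤ) < -D) :
    IsSquare (Ideal.absNorm I) := by
  obtain ⟨z, rfl⟩ := hI
  rw [Ideal.submodule_span_eq, Ideal.absNorm_span_singleton] at hlt ⊢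
  obtain ⟨a, b, hab⟩ := exists_four_mul_norm_eq_sq_sub_mul_sq e hD z
  have hDneg : D < 0 := by omega
  have hnorm : ((Algebra.norm ℤ z).natAbs : ℤ) = Algebra.norm ℤ z :=
    Int.natAbs_of_nonneg (by nlinarith [hDneg, sq_nonneg a, sq_nonneg b])
  have hb : b = 0 := by
    by_contra hb
    have hb_sq : 0 < b ^ 2 := by positivity
    nlinarith [sq_nonneg a]
  refine isSquare_of_isSquare_sq_mul two_ne_zero ⟨a.natAbs, ?_⟩
  zify
  rw [← Int.natCast_natAbs (Algebra.norm ℤ z), hnorm, abs_mul_abs_self]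
  linear_combination hab - D * b * hb

theorem absNorm_eq_of_mk0_pow_eq (e : K ≃+* QuadraticAlgebra ℚ D 0) (hD : Squarefree D) {k : ℕ}
    (hk : Odd k) {I J : (Ideal (𝓞 K))⁰}
    (hI : Squarefree (Ideal.absNorm (I : Ideal (𝓞 K))))
    (hJ : Squarefree (Ideal.absNorm (J : Ideal (𝓞 K))))
    (hlt : 4 * ((Ideal.absNorm (I : Ideal (𝓞 K)) * Ideal.absNorm (J : Ideal (𝓞 K)) : ℤ)) ^ k < -D)
    (h : ClassGroup.mk0 I ^ k = ClassGroup.mk0 J ^ k) :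
    Ideal.absNorm (I : Ideal (𝓞 K)) = Ideal.absNorm (J : Ideal (𝓞 K)) := by
  obtain ⟨J', hJ'class, hJ'norm⟩ := exists_mk0_eq_inv_and_absNorm_mul_eq J
  rw [finrank_eq_two_of_ringEquiv_quadraticAlgebra e, sq, Nat.mul_right_inj hJ.ne_zero] at hJ'norm
  have principal : ((I * J') ^ k : Ideal (𝓞 K)).IsPrincipal := by
    refine (ClassGroup.mk0_eq_one_iff ((I * J') ^ k).2).mp ?_
    rw [Subtype.coe_eta, map_pow, map_mul, hJ'class, mul_pow, h, ← mul_pow, mul_inv_cancel, one_pow]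
  have norm_eq : Ideal.absNorm ((I * J') ^ k : Ideal (𝓞 K)) =
      (Ideal.absNorm (I : Ideal (𝓞 K)) * Ideal.absNorm (J : Ideal (𝓞 K))) ^ k := by
    rw [map_pow, map_mul, hJ'norm]
  have square : IsSquare
      ((Ideal.absNorm (I : Ideal (𝓞 K)) * Ideal.absNorm (J : Ideal (𝓞 K))) ^ k) := by
    rw [← norm_eq]
    refine isSquare_absNorm_of_isPrincipal_of_lt e hD principal ?_
    rw [norm_eq]
    exact_mod_cast hlt
  exact eq_of_squarefree_of_isSquare_mul hI hJ (isSquare_of_isSquare_pow hk square)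

end NumberField

section Adjoin

variable {F E : Type*} [Field F] {a b : F} [Fact (∀ r : F, r ^ 2 ≠ a + b * r)]

theorem adjoin_omega_eq_top : F⟮(QuadraticAlgebra.omega : QuadraticAlgebra F a b)⟯ = ⊤ := by
  refine eq_top_iff.mpr fun z _ ↦ ?_
  rw [← QuadraticAlgebra.mk_eta z, QuadraticAlgebra.mk_eq_add_smul_omega]
  exact add_mem (IntermediateField.algebraMap_mem _ _)
    (IntermediateField.smul_mem _ (mem_adjoin_simple_self F _))

variable [Field E] [Algebra F E]

theorem adjoin_simple_eq_fieldRange_lift (u : {u : E // u * u = a • 1 + b • u}) :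
    F⟮(u : E)⟯ = (QuadraticAlgebra.lift u).fieldRange := by
  rw [AlgHom.fieldRange_eq_map, ← adjoin_omega_eq_top, adjoin_map, Set.image_singleton]
  simp

/-- The field generated by a root `u` of the irreducible polynomial `X² - bX - a`, identified with
the quadratic algebra `F[ω]`, `ω² = a + bω`, by sending `u` to `ω`. -/
noncomputable def adjoinSimpleEquivQuadraticAlgebra (u : {u : E // u * u = a • 1 + b • u}) :
    F⟮(u : E)⟯ ≃ₐ[F] QuadraticAlgebra F a b :=
  (equivOfEq (adjoin_simple_eq_fieldRange_lift u)).trans (AlgHom.equivFieldRange _).symm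

end Adjoin

theorem I_mul_sqrt_mul_self (d : ℕ) :
    (Complex.I * (Real.sqrt d : ℂ)) * (Complex.I * (Real.sqrt d : ℂ)) = -d := by
  rw [mul_mul_mul_comm, Complex.I_mul_I, ← Complex.ofReal_mul, Real.mul_self_sqrt d.cast_nonneg,
    Complex.ofReal_natCast, neg_one_mul]

theorem isIntegral_I_mul_sqrt (d : ℕ) : IsIntegral ℚ (Complex.I * (Real.sqrt d : ℂ)) := by
  refine IsIntegral.of_pow two_pos ?_
  rw [sq, I_mul_sqrt_mul_self]
  exact (isIntegral_natCast d).neg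

theorem sq_ne_neg_natCast {d : ℕ} (hd : d ≠ 0) (r : ℚ) : r ^ 2 ≠ (-d : ℤ) + 0 * r := by
  have hd_pos : (0 : ℚ) < d := by positivity
  push_cast
  nlinarith [sq_nonneg r]

namespace Qneg

instance numberField (d : ℕ) : NumberField (Qneg d) where
  to_finiteDimensional := adjoin.finiteDimensional (isIntegral_I_mul_sqrt d)

/-- The identification of `ℚ(√-d)` with the quadratic algebra `ℚ[ω]`, `ω² = -d`, sending `i√d` to
`ω`. It is only a ring isomorphism, so that it does not commit to one of the `ℚ`-algebra structures
on `Qneg d`. -/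
noncomputable def equivQuadraticAlgebra {d : ℕ} (hd : d ≠ 0) :
    Qneg d ≃+* QuadraticAlgebra ℚ (-d : ℤ) 0 :=
  haveI : Fact (∀ r : ℚ, r ^ 2 ≠ (-d : ℤ) + 0 * r) := ⟨sq_ne_neg_natCast hd⟩
  (adjoinSimpleEquivQuadraticAlgebra ⟨Complex.I * (Real.sqrt d : ℂ), by
    rw [I_mul_sqrt_mul_self]
    simp [Algebra.smul_def]⟩).toRingEquiv

theorem finrank_eq_two {d : ℕ} (hd : d ≠ 0) : Module.finrank ℚ (Qneg d) = 2 :=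
  finrank_eq_two_of_ringEquiv_quadraticAlgebra (equivQuadraticAlgebra hd)

end Qneg

theorem small_split_primes_bound_torsion_general {K : Type*} [Field K] [NumberField K] {D : ℤ}
    (e : K ≃+* QuadraticAlgebra ℚ D 0) (hD : Squarefree D) {ℓ : ℕ} (hodd : Odd ℓ)
    {ι : Type*} {n : ι → ℕ} (hinj : Function.Injective n) (hsq : ∀ i, Squarefree (n i))
    (hnorm : ∀ i, ∃ I : Ideal (𝓞 K), Ideal.absNorm I = n i)
    (hsize : ∀ i, 4 * (n i : ℤ) ^ (2 * ℓ) < -D) :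
    Nat.card ι * Nat.card {c : ClassGroup (𝓞 K) // c ^ ℓ = 1} ≤ Nat.card (ClassGroup (𝓞 K)) := by
  have exists_nonzero_ideal (i : ι) :
      ∃ I : (Ideal (𝓞 K))⁰, Ideal.absNorm (I : Ideal (𝓞 K)) = n i := by
    obtain ⟨I, hI⟩ := hnorm i
    refine ⟨⟨I, mem_nonZeroDivisors_of_ne_zero ?_⟩, hI⟩
    rintro rfl
    exact (hsq i).ne_zero (hI.symm.trans Ideal.absNorm_bot)
  choose I hI using exists_nonzero_ideal
  refine card_mul_card_pow_eq_one_le (f := fun i ↦ ClassGroup.mk0 (I i)) fun i j hij ↦ hinj ?_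
  have mul_pow_lt : 4 * (n i * n j : ℤ) ^ ℓ < -D := by
    have hi := hsize i
    have hj := hsize j
    rw [mul_comm 2, pow_mul] at hi hj
    rw [mul_pow]
    linarith [two_mul_le_add_sq ((n i : ℤ) ^ ℓ) ((n j : ℤ) ^ ℓ)]
  rw [← hI i, ← hI j] at mul_pow_lt ⊢
  exact absNorm_eq_of_mk0_pow_eq e hD hodd (hI i ▸ hsq i) (hI j ▸ hsq j) mul_pow_lt hij

/-- Let `d > 3` be squarefree, `K = ℚ(√-d)`, and `ℓ` an odd prime. If `p₁, …, p_M` are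
distinct rational primes, each not dividing `2d`, each split in `K`, and each
`< (1/4)·d^{1/(2ℓ)}`, then `M · |Cl_K[ℓ]| ≤ |Cl_K|`. -/
theorem small_split_primes_bound_torsion (d : ℕ) (hd : 3 < d) (hsq : Squarefree d)
    (ℓ : ℕ) (hℓ : ℓ.Prime) (hodd : Odd ℓ)
    (M : ℕ) (p : Fin M → ℕ) (hinj : Function.Injective p)
    (hprime : ∀ j, (p j).Prime)
    (hndvd : ∀ j, ¬ p j ∣ 2 * d)
    (hsplit : ∀ j, ∃ P Q : Ideal (𝓞 (Qneg d)), P ≠ Q ∧ P.IsPrime ∧ Q.IsPrime ∧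
      Ideal.span {(p j : 𝓞 (Qneg d))} = P * Q)
    (hsize : ∀ j, (p j : ℝ) < (1 / 4) * (d : ℝ) ^ ((1 : ℝ) / (2 * ℓ))) :
    M * Nat.card {c : ClassGroup (𝓞 (Qneg d)) // c ^ ℓ = 1} ≤
      Nat.card (ClassGroup (𝓞 (Qneg d))) := by
  have norm_eq (j : Fin M) : ∃ P : Ideal (𝓞 (Qneg d)), Ideal.absNorm P = p j :=
    let ⟨P, _, _, hP, hQ, hPQ⟩ := hsplit j
    ⟨P, absNorm_eq_of_span_natCast_eq_mul (hprime j) (Qneg.finrank_eq_two hsq.ne_zero) hP hQ hPQ⟩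
  have size (j : Fin M) : 4 * p j ^ (2 * ℓ) < d :=
    four_mul_pow_lt_of_lt_quarter_rpow (mul_ne_zero two_ne_zero hℓ.ne_zero)
      (by exact_mod_cast hsize j)
  simpa using small_split_primes_bound_torsion_general
    (Qneg.equivQuadraticAlgebra hsq.ne_zero) (Int.squarefree_natAbs.mp (by simpa using hsq)) hodd
    hinj (fun j ↦ (hprime j).squarefree) norm_eq (fun j ↦ by simpa using mod_cast size j)
end

section
/- (Ellenberg–Venkatesh criterion) Fix a degree n ≥ 2, an integer ℓ ≥ 2, a real number η < 1/(2ℓ(n−1)), and ε > 0. There exists a constant C = C(n,ℓ,η,ε) with the following property: if K/ℚ is a number field of degree n and 𝔭₁, …, 𝔭_M are M distinct prime ideals of 𝒪_K such that each 𝔭_j has absolute norm 𝔑(𝔭_j) < D_K^η, each 𝔭_j is unramified in K/ℚ, and no 𝔭_j is an extension of a prime ideal from a proper subfield of K, then |Cl_K[ℓ]| ≤ C · D_K^{1/2+ε} · M^{-1}. -/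
open NumberField

/-- The order of the `ℓ`-torsion subgroup of the class group of a number field `K`. -/
noncomputable def clTor (K : Type*) [Field K] (ℓ : ℕ) : ℕ :=
  Nat.card {c : ClassGroup (𝓞 K) // c ^ ℓ = 1}

/-!
Let `D = D_K`. By Minkowski's theorem every `ℓ`-torsion class contains, for each `j`, an ideal
`𝔭_j 𝔞` with `𝔑(𝔞) ≪ √D` whose `ℓ`-th power has a generator `y` with all archimedean logarithms
`O(log D)`. Attach to the class and to `j` the cofactor `𝔞` and the unit box containing the
logarithms of `y`: there are only `O(D ^ (1/2 + ε))` such data, so it suffices that they determine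
the class and `j`. If `y` and `y'` give the same data but come from distinct primes `𝔭` and `𝔮`,
then `z = y / y'` is bounded at every infinite place and `(z) = (𝔭 / 𝔮) ^ ℓ`. As `𝔭` is unramified
and not extended from a proper subfield, `z` generates `K`; as `1, z, …, z ^ (n - 1)` lie in
`𝔮 ^ (-ℓ (n - 1))`, comparing discriminants gives `D ≪ 𝔑(𝔮) ^ (2ℓ(n - 1))`, which fails for large
`D`. For bounded `D` the number of primes is bounded, and one of them suffices.
-/

open scoped nonZeroDivisors

section CountingIdeals

open UniqueFactorizationMonoid

theorem encard_primesOver_le_finrank_s7 {A B : Type*} [CommRing A] [IsDomain A] [CommRing B]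
    [Algebra A B] [Module.Finite A B] [Module.Flat A B] (p : Ideal A) [p.IsPrime] :
    (p.primesOver B).encard ≤ Module.finrank A B := by
  have : Fintype (p.primesOver B) := (Algebra.QuasiFinite.finite_primesOver p).fintype
  rw [← ENat.card_coe_set_eq, ENat.card_eq_coe_fintype_card, Fintype.card_eq_sum_ones,
    ← Ideal.sum_ramification_inertia_eq_finrank p B]
  refine Nat.cast_le.2 <| Finset.sum_le_sum fun P _ ↦ ?_
  have := P.2.1
  exact Nat.mul_pos (P.1.ramificationIdx_pos A) (P.1.inertiaDeg_pos A)

theorem exists_injOn_primesOver (A B : Type*) [CommRing A] [IsDomain A] [CommRing B]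
    [Nontrivial B] [Algebra A B] [Module.Finite A B] [Module.Free A B] :
    ∃ idx : Ideal B → Fin (Module.finrank A B),
      ∀ p : Ideal A, p.IsPrime → Set.InjOn idx (p.primesOver B) := by
  have : NeZero (Module.finrank A B) := ⟨Module.finrank_pos.ne'⟩
  have hfiber (p : Ideal A) : ∃ f : Ideal B → Fin (Module.finrank A B),
      p.IsPrime → Set.InjOn f (p.primesOver B) := by
    by_cases hp : p.IsPrime
    · obtain ⟨f, -, hf⟩ := (Algebra.QuasiFinite.finite_primesOver p).exists_injOn_of_encard_le
        (t := (Set.univ : Set (Fin (Module.finrank A B))))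
        (by simpa using encard_primesOver_le_finrank_s7 p)
      exact ⟨f, fun _ ↦ hf⟩
    · exact ⟨0, fun h ↦ absurd h hp⟩
  choose f hf using hfiber
  refine ⟨fun P ↦ f (P.under A) P, fun p hp P hP Q hQ hPQ ↦ hf p hp hP hQ ?_⟩
  simpa only [← hP.2.over, ← hQ.2.over] using hPQ

theorem multiset_sum_filter_eq {α ι : Type*} [Fintype ι] [DecidableEq ι] (f : α → ι)
    (s : Multiset α) : ∑ i, s.filter (f · = i) = s := by
  classical
  ext a
  simp [Multiset.count_sum', Multiset.count_filter]

theorem card_le_tsum_pow_mul_rpow {α ι : Type*} [Fintype ι] {S : Finset α} {ψ : α → ι → ℕ}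
    (hinj : Set.InjOn ψ S) (hpos : ∀ a ∈ S, ∀ i, 0 < ψ a i) {B s : ℝ} (hB₀ : 0 ≤ B)
    (hB : ∀ a ∈ S, ((∏ i, ψ a i : ℕ) : ℝ) ≤ B) (hs : 1 < s) :
    (S.card : ℝ) ≤ (∑' m : ℕ, 1 / (m : ℝ) ^ s) ^ Fintype.card ι * B ^ s := by
  classical
  have hsum : Summable fun m : ℕ ↦ 1 / (m : ℝ) ^ s := Real.summable_one_div_nat_rpow.2 hs
  have hterm (a) (ha : a ∈ S) : (1 : ℝ) ≤ B ^ s * ∏ i, 1 / (ψ a i : ℝ) ^ s := by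
    have hprod : (0 : ℝ) < (∏ i, ψ a i : ℕ) := mod_cast Finset.prod_pos fun i _ ↦ hpos a ha i
    rw [Finset.prod_div_distrib, Finset.prod_const_one,
      Real.finsetProd_rpow _ _ fun _ _ ↦ Nat.cast_nonneg _, ← Nat.cast_prod, mul_one_div,
      one_le_div (by positivity)]
    exact Real.rpow_le_rpow hprod.le (hB a ha) (by linarith)
  calc (S.card : ℝ) = ∑ a ∈ S, 1 := by simp
    _ ≤ ∑ a ∈ S, B ^ s * ∏ i, 1 / (ψ a i : ℝ) ^ s := Finset.sum_le_sum hterm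
    _ = B ^ s * ∑ m ∈ S.image ψ, ∏ i, 1 / (m i : ℝ) ^ s := by
        rw [Finset.sum_image hinj, Finset.mul_sum]
    _ ≤ B ^ s * ∑ m ∈ Fintype.piFinset fun i ↦ S.image (ψ · i), ∏ i, 1 / (m i : ℝ) ^ s := by
        gcongr
        refine Finset.image_subset_iff.2 fun a ha ↦ Fintype.mem_piFinset.2 fun i ↦ ?_
        exact Finset.mem_image_of_mem _ ha
    _ = B ^ s * ∏ i, ∑ m ∈ S.image (ψ · i), 1 / (m : ℝ) ^ s := by rw [Finset.prod_univ_sum]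
    _ ≤ B ^ s * ∏ _i : ι, ∑' m : ℕ, 1 / (m : ℝ) ^ s := by
        gcongr with i
        exact hsum.sum_le_tsum _ fun _ _ ↦ by positivity
    _ = (∑' m : ℕ, 1 / (m : ℝ) ^ s) ^ Fintype.card ι * B ^ s := by
        rw [Finset.prod_const, Finset.card_univ, mul_comm]

variable {K : Type*} [Field K] [NumberField K]

/-- The characteristic of the residue field of a nonzero prime ideal `P` of `𝓞 K`, encoded for all
ideals as the nonnegative generator of `P ∩ ℤ`. -/
noncomputable def residueChar (P : Ideal (𝓞 K)) : ℕ := Ideal.absNorm (P.under ℤ)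

theorem residueChar_prime {P : Ideal (𝓞 K)} (hP : Prime P) : (residueChar P).Prime :=
  have := Ideal.isPrime_of_prime hP
  have : NeZero P := ⟨hP.ne_zero⟩
  Nat.absNorm_under_prime P

theorem residueChar_le_absNorm {P : Ideal (𝓞 K)} (hP : P ≠ ⊥) :
    residueChar P ≤ Ideal.absNorm P :=
  Nat.le_of_dvd (Nat.pos_of_ne_zero (Ideal.absNorm_eq_zero_iff.not.2 hP))
    (Int.absNorm_under_dvd_absNorm P)

theorem exists_leftInverse_residueChar (K : Type*) [Field K] [NumberField K] :
    ∃ (idx : Ideal (𝓞 K) → Fin (Module.finrank ℚ K))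
      (decode : Fin (Module.finrank ℚ K) → ℕ → Ideal (𝓞 K)),
      ∀ P : Ideal (𝓞 K), Prime P → decode (idx P) (residueChar P) = P := by
  obtain ⟨idx, hidx⟩ := RingOfIntegers.rank K ▸ exists_injOn_primesOver ℤ (𝓞 K)
  refine ⟨idx, fun i q ↦ Function.invFunOn idx ((Ideal.span {(q : ℤ)}).primesOver (𝓞 K)) i,
    fun P hP ↦ ?_⟩
  have hP' : P.IsPrime := Ideal.isPrime_of_prime hP
  beta_reduce
  rw [residueChar, Int.ideal_span_absNorm_eq_self]
  exact (hidx _ inferInstance).leftInvOn_invFunOn ⟨hP', ⟨rfl⟩⟩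

/-- The products of the residue characteristics of the prime factors of `I`, grouped by the value
of `idx` on the factor. If `idx` separates the primes above each rational prime, this determines
`I`. -/
noncomputable def idealCode {ι : Type*} [DecidableEq ι] (idx : Ideal (𝓞 K) → ι)
    (I : Ideal (𝓞 K)) (i : ι) : ℕ :=
  (((normalizedFactors I).filter (idx · = i)).map residueChar).prod

section idealCode

variable {ι : Type*} [DecidableEq ι] (idx : Ideal (𝓞 K) → ι)

theorem normalizedFactors_idealCode (I : Ideal (𝓞 K)) (i : ι) :
    normalizedFactors (idealCode idx I i) =
      ((normalizedFactors I).filter (idx · = i)).map residueChar := by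
  refine normalizedFactors_prod_of_prime fun q hq ↦ ?_
  obtain ⟨P, hP, rfl⟩ := Multiset.mem_map.1 hq
  exact (residueChar_prime
    (prime_of_normalized_factor P (Multiset.mem_of_mem_filter hP))).prime

theorem idealCode_pos (I : Ideal (𝓞 K)) (i : ι) : 0 < idealCode idx I i := by
  refine Nat.pos_of_ne_zero (Multiset.prod_ne_zero fun h0 ↦ ?_)
  obtain ⟨P, hP, h0⟩ := Multiset.mem_map.1 h0
  exact (residueChar_prime
    (prime_of_normalized_factor P (Multiset.mem_of_mem_filter hP))).ne_zero h0

theorem prod_idealCode_le_absNorm [Fintype ι] {I : Ideal (𝓞 K)} (hI : I ≠ ⊥) :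
    ∏ i, idealCode idx I i ≤ Ideal.absNorm I := by
  calc ∏ i, idealCode idx I i
      = ((normalizedFactors I).map residueChar).prod := by
        conv_rhs =>
          rw [← multiset_sum_filter_eq idx (normalizedFactors I),
            ← Multiset.coe_mapAddMonoidHom, map_sum, Multiset.prod_sum]
        rfl
    _ ≤ ((normalizedFactors I).map Ideal.absNorm).prod :=
        Multiset.prod_map_le_prod_map₀ _ _ (fun _ _ ↦ Nat.zero_le _) fun P hP ↦
          residueChar_le_absNorm (prime_of_normalized_factor P hP).ne_zero
    _ = Ideal.absNorm I := by
        rw [← map_multiset_prod, Ideal.prod_normalizedFactors_eq_self hI]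

theorem injOn_idealCode [Finite ι] {decode : ι → ℕ → Ideal (𝓞 K)}
    (hdecode : ∀ P, Prime P → decode (idx P) (residueChar P) = P) :
    Set.InjOn (idealCode idx) {I | I ≠ ⊥} := by
  have := Fintype.ofFinite ι
  have hfilter (I : Ideal (𝓞 K)) (i : ι) :
      (normalizedFactors (idealCode idx I i)).map (decode i) =
        (normalizedFactors I).filter (idx · = i) := by
    rw [normalizedFactors_idealCode, Multiset.map_map]
    refine (Multiset.map_congr rfl fun P hP ↦ ?_).trans (Multiset.map_id _)
    obtain ⟨hPI, rfl⟩ := Multiset.mem_filter.1 hP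
    exact hdecode P (prime_of_normalized_factor P hPI)
  intro I hI J hJ hIJ
  rw [← Ideal.prod_normalizedFactors_eq_self hI, ← Ideal.prod_normalizedFactors_eq_self hJ,
    ← multiset_sum_filter_eq idx (normalizedFactors I),
    ← multiset_sum_filter_eq idx (normalizedFactors J)]
  simp only [← hfilter, hIJ]

end idealCode

theorem card_ideals_le {S : Finset (Ideal (𝓞 K))} {B s : ℝ} (hB : 0 ≤ B)
    (hS : ∀ I ∈ S, I ≠ ⊥ ∧ (Ideal.absNorm I : ℝ) ≤ B) (hs : 1 < s) :
    (S.card : ℝ) ≤ (∑' m : ℕ, 1 / (m : ℝ) ^ s) ^ Module.finrank ℚ K * B ^ s := by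
  obtain ⟨idx, decode, hdecode⟩ := exists_leftInverse_residueChar K
  have hinj := (injOn_idealCode idx hdecode).mono fun I hI ↦ (hS I hI).1
  simpa using card_le_tsum_pow_mul_rpow hinj (fun I _ ↦ idealCode_pos idx I) hB
    (fun I hI ↦ (Nat.cast_le.2 (prod_idealCode_le_absNorm idx (hS I hI).1)).trans (hS I hI).2) hs

end CountingIdeals

section Discriminant

variable {K : Type*} [Field K] [NumberField K] {ι : Type*} [Fintype ι] [DecidableEq ι]

theorem discr_eq_det_sq_mul_discr {A B : Type*} [CommRing A] [CommRing B] [Algebra A B]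
    (b : Module.Basis ι A B) (v : ι → B) :
    Algebra.discr A v = b.det v ^ 2 * Algebra.discr A b := by
  rw [b.det_apply, ← Algebra.discr_of_matrix_vecMul, b.toMatrix_map_vecMul]

theorem abs_discr_le_of_mem_span (b c : Module.Basis ι ℚ K)
    (hc : ∀ i, c i ∈ Submodule.span ℤ (Set.range b)) :
    |Algebra.discr ℚ b| ≤ |Algebra.discr ℚ c| := by
  choose P hP using fun i ↦ (b.mem_span_iff_repr_mem ℤ (c i)).1 (hc i)
  have hdet : b.det c = (Matrix.det (Matrix.of fun i j ↦ P j i) : ℤ) := by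
    rw [b.det_apply, ← eq_intCast (algebraMap ℤ ℚ), RingHom.map_det]
    congr 1
    ext i j
    exact (hP j i).symm
  have hdet0 : Matrix.det (Matrix.of fun i j ↦ P j i) ≠ 0 := by
    rw [← Int.cast_ne_zero (α := ℚ), ← hdet]
    exact (b.isUnit_det c).ne_zero
  rw [discr_eq_det_sq_mul_discr b c, abs_mul, abs_pow, hdet]
  refine le_mul_of_one_le_left (abs_nonneg _) (one_le_pow₀ ?_)
  exact_mod_cast Int.one_le_abs hdet0

theorem abs_discr_mul_absNorm_sq_le (I : (FractionalIdeal (𝓞 K)⁰ K)ˣ)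
    (b : Module.Basis ι ℚ K) (hb : ∀ i, b i ∈ (I : FractionalIdeal (𝓞 K)⁰ K)) :
    |(discr K : ℚ)| * FractionalIdeal.absNorm (I : FractionalIdeal (𝓞 K)⁰ K) ^ 2 ≤
      |Algebra.discr ℚ b| := by
  classical
  let eI := (basisOfFractionalIdeal K I).indexEquiv b
  let e := (integralBasis K).indexEquiv (basisOfFractionalIdeal K I)
  have hI : |Algebra.discr ℚ ((basisOfFractionalIdeal K I).reindex eI)| =
      |(discr K : ℚ)| *
        FractionalIdeal.absNorm (I : FractionalIdeal (𝓞 K)⁰ K) ^ 2 := by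
    rw [← det_basisOfFractionalIdeal_eq_absNorm K I e, coe_discr, sq_abs,
      mul_comm |Algebra.discr _ _|, ← abs_sq (Module.Basis.det _ _), ← abs_mul,
      ← discr_eq_det_sq_mul_discr, Module.Basis.coe_reindex, Module.Basis.coe_reindex,
      Algebra.discr_reindex, Algebra.discr_reindex]
  rw [← hI]
  refine abs_discr_le_of_mem_span _ b fun i ↦ ?_
  rw [Module.Basis.range_reindex, mem_span_basisOfFractionalIdeal]
  exact hb i

open Finset in
theorem sum_card_Ioi_fin_mul_two (n : ℕ) : (∑ i : Fin n, #(Ioi i)) * 2 = n * (n - 1) := by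
  simp only [Fin.card_Ioi]
  rw [Fin.sum_univ_eq_sum_range (fun i ↦ n - 1 - i), sum_range_reflect (fun i ↦ i),
    sum_range_id_mul_two]

theorem abs_discr_powerBasis_le (pb : PowerBasis ℚ K) {R : ℝ}
    (hR : ∀ w : InfinitePlace K, w pb.gen ≤ R) :
    |(Algebra.discr ℚ pb.basis : ℝ)| ≤ (2 * R) ^ (pb.dim * (pb.dim - 1)) := by
  have hcard : Fintype.card (K →ₐ[ℚ] ℂ) = pb.dim := by rw [AlgHom.card, pb.finrank]
  let e : Fin pb.dim ≃ (K →ₐ[ℚ] ℂ) := (Fintype.equivFinOfCardEq hcard).symm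
  have he (i) : ‖e i pb.gen‖ ≤ R := hR (InfinitePlace.mk (e i).toRingHom)
  calc |(Algebra.discr ℚ pb.basis : ℝ)|
      = ‖algebraMap ℚ ℂ (Algebra.discr ℚ pb.basis)‖ := by simp [← Complex.norm_ratCast]
    _ = ∏ i, ∏ j > i, ‖e j pb.gen - e i pb.gen‖ ^ 2 := by
        rw [Algebra.discr_powerBasis_eq_prod ℚ ℂ pb e]; simp only [norm_prod, norm_pow]
    _ ≤ ∏ i : Fin pb.dim, ∏ _j > i, (2 * R) ^ 2 := by
        gcongr with i _ j
        exact (norm_sub_le _ _).trans (by linarith [he i, he j])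
    _ = (2 * R) ^ (pb.dim * (pb.dim - 1)) := by
        simp only [Finset.prod_const, Finset.prod_pow_eq_pow_sum]
        rw [← sum_card_Ioi_fin_mul_two, mul_comm _ 2, pow_mul]

-- The powers `1, z, …, z ^ (n - 1)` all lie in `I ^ (n - 1)`.
theorem natAbs_discr_mul_absNorm_pow_le {z : K} (hz : IntermediateField.adjoin ℚ {z} = ⊤)
    (I : (FractionalIdeal (𝓞 K)⁰ K)ˣ) (hI : 1 ≤ (I : FractionalIdeal (𝓞 K)⁰ K))
    (hzI : z ∈ (I : FractionalIdeal (𝓞 K)⁰ K)) {R : ℝ} (hR : ∀ w : InfinitePlace K, w z ≤ R) :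
    ((discr K).natAbs : ℝ) * (FractionalIdeal.absNorm (I : FractionalIdeal (𝓞 K)⁰ K) : ℝ) ^
          (2 * (Module.finrank ℚ K - 1)) ≤
      (2 * R) ^ (Module.finrank ℚ K * (Module.finrank ℚ K - 1)) := by
  have hint : IsIntegral ℚ z := Algebra.IsIntegral.isIntegral z
  have htop : Algebra.adjoin ℚ {z} = ⊤ := by
    rw [← IntermediateField.adjoin_simple_toSubalgebra_of_isAlgebraic hint.isAlgebraic, hz,
      IntermediateField.top_toSubalgebra]
  let pb := PowerBasis.ofAdjoinEqTop hint htop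
  have hgen : pb.gen = z := PowerBasis.ofAdjoinEqTop_gen hint htop
  have hmem (i) : pb.basis i ∈
      ((I ^ (pb.dim - 1) : (FractionalIdeal _ K)ˣ) : FractionalIdeal (𝓞 K)⁰ K) := by
    rw [pb.basis_eq_pow, hgen, Units.val_pow_eq_pow_val]
    refine pow_right_mono₀ hI (Nat.le_sub_one_of_lt i.2) (?_ : z ^ (i : ℕ) ∈ _)
    rw [← FractionalIdeal.mem_coe, FractionalIdeal.coe_pow]
    exact Submodule.pow_mem_pow _ hzI _
  have hlattice := abs_discr_mul_absNorm_sq_le _ pb.basis hmem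
  rw [Units.val_pow_eq_pow_val, map_pow, ← pow_mul, mul_comm _ 2] at hlattice
  rw [pb.finrank, Nat.cast_natAbs, Int.cast_abs]
  refine le_trans ?_ (abs_discr_powerBasis_le pb (by rwa [hgen]))
  exact_mod_cast hlattice

theorem natAbs_discr_le_of_adjoin_div_eq_top {y y' : 𝓞 K} (hy' : y' ≠ 0)
    (htop : IntermediateField.adjoin ℚ {(y / y' : K)} = ⊤) {P Q : Ideal (𝓞 K)} (hQ : Q ≠ ⊥)
    (h : Ideal.span {y} * Q = Ideal.span {y'} * P) {R : ℝ}
    (hR : ∀ w : InfinitePlace K, w (y / y' : K) ≤ R) :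
    ((discr K).natAbs : ℝ) ≤ (Ideal.absNorm Q : ℝ) ^ (2 * (Module.finrank ℚ K - 1)) *
      (2 * R) ^ (Module.finrank ℚ K * (Module.finrank ℚ K - 1)) := by
  have hQ0 : (Q : FractionalIdeal (𝓞 K)⁰ K) ≠ 0 := FractionalIdeal.coeIdeal_ne_zero.2 hQ
  have hy'K : (y' : K) ≠ 0 := RingOfIntegers.coe_ne_zero_iff.2 hy'
  have hone : 1 ≤ (Q : FractionalIdeal (𝓞 K)⁰ K)⁻¹ := by
    rw [← inv_one]
    refine FractionalIdeal.inv_anti_mono hQ0 one_ne_zero ?_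
    exact FractionalIdeal.coeIdeal_le_one
  have hmem : (y / y' : K) ∈ (Q : FractionalIdeal (𝓞 K)⁰ K)⁻¹ := by
    rw [FractionalIdeal.mem_inv_iff hQ0]
    intro q hq
    obtain ⟨q, hqQ, rfl⟩ := (FractionalIdeal.mem_coeIdeal _).1 hq
    obtain ⟨p, -, hp⟩ := Ideal.mem_span_singleton_mul.1
      (h ▸ Ideal.mul_mem_mul (Ideal.mem_span_singleton_self y) hqQ)
    refine (FractionalIdeal.mem_one_iff _).2 ⟨p, ?_⟩
    rw [div_mul_eq_mul_div, eq_div_iff hy'K, mul_comm, ← map_mul, hp, map_mul]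
  have hbound := natAbs_discr_mul_absNorm_pow_le htop (Units.mk0 _ (inv_ne_zero hQ0)) hone hmem hR
  have hQpos : (0 : ℝ) < Ideal.absNorm Q := by
    exact_mod_cast Nat.pos_of_ne_zero (Ideal.absNorm_eq_zero_iff.not.2 hQ)
  rw [Units.val_mk0, map_inv₀, FractionalIdeal.coeIdeal_absNorm, Rat.cast_inv, Rat.cast_natCast,
    inv_pow, mul_inv_le_iff₀ (by positivity)] at hbound
  rwa [mul_comm]

end Discriminant

section Generation

variable {K : Type*} [Field K] [NumberField K]

/-- The ideal `𝔭`, lying above the rational prime `q`, is unramified over `ℚ`: `𝔭 ^ 2 ∤ q`. -/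
def IsUnramifiedOverRat (𝔭 : Ideal (𝓞 K)) : Prop :=
  ∀ q : ℕ, q.Prime → (q : 𝓞 K) ∈ 𝔭 → ¬ 𝔭 ^ 2 ∣ Ideal.span {(q : 𝓞 K)}

/-- The ideal `𝔭` is the extension `𝔭₀ 𝓞 K` of a prime ideal `𝔭₀` of a proper subfield of `K`. -/
def IsExtendedFromProperSubfield (𝔭 : Ideal (𝓞 K)) : Prop :=
  ∃ K₀ : IntermediateField ℚ K, K₀ ≠ ⊤ ∧ ∃ 𝔭₀ : Ideal (𝓞 K₀),
    𝔭₀.IsPrime ∧ Ideal.map (algebraMap (𝓞 K₀) (𝓞 K)) 𝔭₀ = 𝔭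

theorem ne_bot_of_not_isExtendedFromProperSubfield (hK : 2 ≤ Module.finrank ℚ K)
    {𝔭 : Ideal (𝓞 K)} (h𝔭 : ¬ IsExtendedFromProperSubfield 𝔭) : 𝔭 ≠ ⊥ := by
  rintro rfl
  refine h𝔭 ⟨⊥, fun h ↦ ?_, ⊥, Ideal.isPrime_bot, Ideal.map_bot⟩
  have := IntermediateField.finrank_bot' (F := ℚ) (E := K)
  rw [h, IntermediateField.finrank_top] at this
  omega

theorem exists_isCoprime_mul_eq {R : Type*} [CommRing R] [IsDedekindDomain R] (I J : Ideal R)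
    (hJ : J ≠ ⊥) : ∃ G A B : Ideal R, G ≠ ⊥ ∧ IsCoprime A B ∧ I = G * A ∧ J = G * B := by
  obtain ⟨A, B, hA, hB, hunit⟩ := extract_gcd I J
  refine ⟨gcd I J, A, B, fun h ↦ hJ ?_, Ideal.isCoprime_iff_gcd.2 ?_, hA, hB⟩
  · exact ((gcd_eq_zero_iff _ _).1 h).2
  · exact isUnit_iff_eq_one.1 hunit

theorem eq_of_isCoprime_of_mul_eq_mul {R : Type*} [CommRing R] [IsDedekindDomain R]
    {A B P Q : Ideal R} (hAB : IsCoprime A B) (hPQ : IsCoprime P Q) (h : A * Q = B * P) :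
    A = P :=
  dvd_antisymm (hAB.dvd_of_dvd_mul_left (h ▸ dvd_mul_right A Q))
    (hPQ.dvd_of_dvd_mul_right (h ▸ dvd_mul_left P B))

theorem map_comap_eq_of_map_eq_pow {R : Type*} [CommRing R] (φ : R →+* 𝓞 K) {𝔭 : Ideal (𝓞 K)}
    (h𝔭 : Prime 𝔭) (hunr : IsUnramifiedOverRat 𝔭) {A : Ideal R} {ℓ : ℕ} (hℓ : ℓ ≠ 0)
    (hA : A.map φ = 𝔭 ^ ℓ) : (𝔭.comap φ).map φ = 𝔭 := by
  have hprime := Ideal.isPrime_of_prime h𝔭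
  have hdvd : (𝔭.comap φ).map φ ∣ 𝔭 ^ ℓ := by
    rw [Ideal.dvd_iff_le, ← hA]
    exact Ideal.map_mono (Ideal.map_le_iff_le_comap.1 (hA ▸ Ideal.pow_le_self hℓ))
  obtain ⟨i, -, hi⟩ := (dvd_prime_pow h𝔭 ℓ).1 hdvd
  rw [associated_iff_eq] at hi
  have hi0 : i ≠ 0 := by
    rintro rfl
    refine hprime.ne_top (top_le_iff.1 ?_)
    rw [← Ideal.one_eq_top, ← pow_zero 𝔭, ← hi]
    exact Ideal.map_comap_le
  have hi2 : i < 2 := by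
    by_contra! hi2
    have := hprime.isMaximal h𝔭.ne_zero
    obtain ⟨q, -, -, hq𝔭, hq, -⟩ := Ideal.exists_prime_and_absNorm_eq_pow 𝔭
    refine hunr q hq hq𝔭 ((pow_dvd_pow 𝔭 hi2).trans ?_)
    rw [← hi, Ideal.dvd_span_singleton, ← map_natCast φ]
    exact Ideal.mem_map_of_mem φ (by rwa [Ideal.mem_comap, map_natCast])
  rw [hi, show i = 1 by omega, pow_one]

theorem exists_map_span_mul_eq_of_div_mem {K₀ : IntermediateField ℚ K} {y y' : 𝓞 K}
    (hy' : y' ≠ 0) (hmem : (y / y' : K) ∈ K₀) {P Q : Ideal (𝓞 K)}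
    (h : Ideal.span {y} * Q = Ideal.span {y'} * P) :
    ∃ a b : 𝓞 K₀, b ≠ 0 ∧ (Ideal.span {a}).map (algebraMap (𝓞 K₀) (𝓞 K)) * Q =
      (Ideal.span {b}).map (algebraMap (𝓞 K₀) (𝓞 K)) * P := by
  obtain ⟨a, b, hb, hab⟩ := IsFractionRing.div_surjective (A := 𝓞 K₀) (⟨_, hmem⟩ : K₀)
  have hb : b ≠ 0 := nonZeroDivisors.ne_zero hb
  refine ⟨a, b, hb, mul_left_cancel₀ (Ideal.span_singleton_eq_bot.not.2 hy') ?_⟩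
  have hcross : y' * algebraMap (𝓞 K₀) (𝓞 K) a = y * algebraMap (𝓞 K₀) (𝓞 K) b := by
    apply RingOfIntegers.coe_injective
    have hab : ((a : K₀) : K) / ((b : K₀) : K) = y / y' := by simpa using congr_arg Subtype.val hab
    rw [div_eq_div_iff (by simpa using hb) (by simpa using hy')] at hab
    rw [map_mul, map_mul, mul_comm]
    exact hab
  simp only [Ideal.map_span, Set.image_singleton]
  rw [← mul_assoc, Ideal.span_singleton_mul_span_singleton, hcross,
    ← Ideal.span_singleton_mul_span_singleton, mul_right_comm, h, mul_right_comm, mul_assoc]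

theorem adjoin_div_eq_top {𝔭 𝔮 : Ideal (𝓞 K)} (h𝔭 : Prime 𝔭) (h𝔮 : Prime 𝔮) (hne : 𝔭 ≠ 𝔮)
    (hunr : IsUnramifiedOverRat 𝔭) (hext : ¬ IsExtendedFromProperSubfield 𝔭) {ℓ : ℕ}
    (hℓ : ℓ ≠ 0) {y y' : 𝓞 K} (hy' : y' ≠ 0)
    (h : Ideal.span {y} * 𝔮 ^ ℓ = Ideal.span {y'} * 𝔭 ^ ℓ) :
    IntermediateField.adjoin ℚ {(y / y' : K)} = ⊤ := by
  by_contra htop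
  set K₀ := IntermediateField.adjoin ℚ {(y / y' : K)}
  set φ := algebraMap (𝓞 K₀) (𝓞 K)
  have hφ : Function.Injective φ := FaithfulSMul.algebraMap_injective _ _
  obtain ⟨a, b, hb, hab⟩ := exists_map_span_mul_eq_of_div_mem hy'
    (IntermediateField.mem_adjoin_simple_self ℚ _) h
  obtain ⟨G, A, B, hG, hAB, hA, hB⟩ := exists_isCoprime_mul_eq (Ideal.span {a}) (Ideal.span {b})
    (Ideal.span_singleton_eq_bot.not.2 hb)
  have hcancel : A.map φ * 𝔮 ^ ℓ = B.map φ * 𝔭 ^ ℓ := by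
    refine mul_left_cancel₀ ((Ideal.map_eq_bot_iff_of_injective hφ).not.2 hG) ?_
    rw [← mul_assoc, ← mul_assoc, ← Ideal.map_mul, ← Ideal.map_mul, ← hA, ← hB, hab]
  have hABmap : IsCoprime (A.map φ) (B.map φ) := by
    rw [Ideal.isCoprime_iff_sup_eq, ← Ideal.map_sup, hAB.sup_eq, Ideal.map_top]
  have hprime := Ideal.isPrime_of_prime h𝔭
  have h𝔭𝔮 : IsCoprime 𝔭 𝔮 := Ideal.isCoprime_iff_sup_eq.2 <|
    (hprime.isMaximal h𝔭.ne_zero).coprime_of_ne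
      ((Ideal.isPrime_of_prime h𝔮).isMaximal h𝔮.ne_zero) hne
  have hApow : A.map φ = 𝔭 ^ ℓ := eq_of_isCoprime_of_mul_eq_mul hABmap h𝔭𝔮.pow hcancel
  exact hext ⟨K₀, htop, 𝔭.comap φ, Ideal.comap_isPrime φ 𝔭,
    map_comap_eq_of_map_eq_pow φ h𝔭 hunr hℓ hApow⟩

end Generation

section Minkowski

variable {K : Type*} [Field K] [NumberField K]

open mixedEmbedding in
theorem minkowskiBound_le (I : (FractionalIdeal (𝓞 K)⁰ K)ˣ) :
    minkowskiBound K I ≤ convexBodyLTFactor K *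
      ENNReal.ofReal (FractionalIdeal.absNorm (I : FractionalIdeal (𝓞 K)⁰ K) *
        √((discr K).natAbs : ℝ)) := by
  have hfactor : (2⁻¹ : ENNReal) ^ InfinitePlace.nrComplexPlaces K * 2 ^ Module.finrank ℚ K ≤
      convexBodyLTFactor K := by
    rw [← InfinitePlace.card_add_two_mul_card_eq_rank, two_mul, pow_add, pow_add, mul_left_comm,
      ← mul_assoc (2⁻¹ ^ _), ← mul_pow, ENNReal.inv_mul_cancel (by simp) (by simp), one_pow,
      one_mul, convexBodyLTFactor]
    push_cast
    gcongr
    exact_mod_cast Real.two_le_pi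
  have hsqrt : ((NNReal.sqrt ‖discr K‖₊ : NNReal) : ENNReal) =
      ENNReal.ofReal √((discr K).natAbs : ℝ) := by
    rw [← ENNReal.ofReal_coe_nnreal, Real.coe_sqrt, coe_nnnorm, Int.norm_eq_abs, Nat.cast_natAbs,
      Int.cast_abs]
  rw [minkowskiBound, volume_fundamentalDomain_fractionalIdealLatticeBasis,
    volume_fundamentalDomain_latticeBasis, mixedEmbedding.finrank, hsqrt,
    ENNReal.ofReal_mul (Rat.cast_nonneg.2 (FractionalIdeal.absNorm_nonneg _))]
  refine le_of_eq_of_le ?_ (mul_le_mul_left hfactor _)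
  ring

open mixedEmbedding in
theorem exists_ne_zero_mem_ideal_forall_lt {𝔟 : Ideal (𝓞 K)} (h𝔟 : 𝔟 ≠ ⊥)
    {f : InfinitePlace K → ℝ} (hf : ∀ w, 0 ≤ f w)
    (h : Ideal.absNorm 𝔟 * √((discr K).natAbs : ℝ) < ∏ w, f w ^ w.mult) :
    ∃ x ∈ 𝔟, x ≠ 0 ∧ ∀ w : InfinitePlace K, w (x : K) < f w := by
  classical
  lift f to InfinitePlace K → NNReal using hf
  let I : (FractionalIdeal (𝓞 K)⁰ K)ˣ := Units.mk0 𝔟 (FractionalIdeal.coeIdeal_ne_zero.2 h𝔟)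
  have hvol : minkowskiBound K I < MeasureTheory.volume (convexBodyLT K f) := by
    refine (minkowskiBound_le I).trans_lt ?_
    rw [convexBodyLT_volume, Units.val_mk0, FractionalIdeal.coeIdeal_absNorm, Rat.cast_natCast]
    refine ENNReal.mul_lt_mul_right (ENNReal.coe_ne_zero.2 (convexBodyLTFactor_ne_zero K))
      ENNReal.coe_ne_top ?_
    rw [← ENNReal.ofReal_coe_nnreal, ENNReal.ofReal_lt_ofReal_iff_of_nonneg (by positivity)]
    simpa using h
  obtain ⟨x, hxI, hx0, hx⟩ := exists_ne_zero_mem_ideal_lt K I hvol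
  obtain ⟨x, hx𝔟, rfl⟩ := (FractionalIdeal.mem_coeIdeal _).1 hxI
  exact ⟨x, hx𝔟, fun h ↦ hx0 (by simp [h]), hx⟩

theorem prod_pow_mult_eq_absNorm_span (y : 𝓞 K) :
    ∏ w : InfinitePlace K, w (y : K) ^ w.mult = Ideal.absNorm (Ideal.span {y}) := by
  rw [InfinitePlace.prod_eq_abs_norm, Ideal.absNorm_span_singleton, ← Algebra.coe_norm_int,
    Nat.cast_natAbs, Int.cast_abs, Rat.cast_abs, Rat.cast_intCast]

theorem prod_rpow_pow_mult_eq_absNorm {𝔟 : Ideal (𝓞 K)} {γ : 𝓞 K} {ℓ : ℕ} (hℓ : ℓ ≠ 0)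
    (h : 𝔟 ^ ℓ = Ideal.span {γ}) :
    ∏ w : InfinitePlace K, (w (γ : K) ^ (ℓ : ℝ)⁻¹) ^ w.mult = Ideal.absNorm 𝔟 := by
  have hcomm (w : InfinitePlace K) :
      (w (γ : K) ^ (ℓ : ℝ)⁻¹) ^ w.mult = (w (γ : K) ^ w.mult) ^ (ℓ : ℝ)⁻¹ :=
    (Real.rpow_pow_comm (apply_nonneg w _) _ _)
  simp only [hcomm]
  rw [Real.finsetProd_rpow _ _ fun w _ ↦ by positivity, prod_pow_mult_eq_absNorm_span, ← h,
    map_pow, Nat.cast_pow, Real.pow_rpow_inv_natCast (Nat.cast_nonneg _) hℓ]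

theorem absNorm_le_pow_finrank {𝔟 : Ideal (𝓞 K)} {y : 𝓞 K} {ℓ : ℕ} (hℓ : ℓ ≠ 0)
    (hy : Ideal.span {y} = 𝔟 ^ ℓ) {T : ℝ} (hT : 0 ≤ T)
    (hyT : ∀ w : InfinitePlace K, w (y : K) ≤ T ^ ℓ) :
    (Ideal.absNorm 𝔟 : ℝ) ≤ T ^ Module.finrank ℚ K := by
  rw [← pow_le_pow_iff_left₀ (by positivity) (by positivity) hℓ]
  calc (Ideal.absNorm 𝔟 : ℝ) ^ ℓ = ∏ w : InfinitePlace K, w (y : K) ^ w.mult := by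
        rw [prod_pow_mult_eq_absNorm_span, hy, map_pow, Nat.cast_pow]
    _ ≤ ∏ w : InfinitePlace K, (T ^ ℓ) ^ w.mult := by
        gcongr with w
        exact hyT w
    _ = (T ^ Module.finrank ℚ K) ^ ℓ := by
        rw [Finset.prod_pow_eq_pow_sum, InfinitePlace.sum_mult_eq, pow_right_comm]

theorem sum_mult_mul_log_nonneg {y : 𝓞 K} (hy : y ≠ 0) :
    0 ≤ ∑ w : InfinitePlace K, w.mult * Real.log (w (y : K)) := by
  have hpos (w : InfinitePlace K) : 0 < w (y : K) :=
    InfinitePlace.pos_iff.2 (RingOfIntegers.coe_ne_zero_iff.2 hy)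
  simp only [← Real.log_pow]
  rw [← Real.log_prod fun w _ ↦ (pow_pos (hpos w) _).ne', prod_pow_mult_eq_absNorm_span]
  exact Real.log_natCast_nonneg _

theorem abs_log_le_finrank_mul_log {y : 𝓞 K} (hy : y ≠ 0) {R : ℝ}
    (hR : ∀ w : InfinitePlace K, w (y : K) ≤ R) (w : InfinitePlace K) :
    |Real.log (w (y : K))| ≤ Module.finrank ℚ K * Real.log R := by
  have hlog (v : InfinitePlace K) : Real.log (v (y : K)) ≤ Real.log R :=
    Real.log_le_log (InfinitePlace.pos_iff.2 (RingOfIntegers.coe_ne_zero_iff.2 hy)) (hR v)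
  have hdefect : Real.log R - Real.log (w (y : K)) ≤ Module.finrank ℚ K * Real.log R := by
    calc Real.log R - Real.log (w (y : K))
        ≤ w.mult * (Real.log R - Real.log (w (y : K))) :=
          le_mul_of_one_le_left (sub_nonneg.2 (hlog w)) (mod_cast w.mult_pos)
      _ ≤ ∑ v : InfinitePlace K, v.mult * (Real.log R - Real.log (v (y : K))) :=
          Finset.single_le_sum
            (f := fun v : InfinitePlace K ↦ v.mult * (Real.log R - Real.log (v (y : K))))
            (fun v _ ↦ mul_nonneg (Nat.cast_nonneg _) (sub_nonneg.2 (hlog v)))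
            (Finset.mem_univ w)
      _ = Module.finrank ℚ K * Real.log R -
            ∑ v : InfinitePlace K, v.mult * Real.log (v (y : K)) := by
          simp only [mul_sub, Finset.sum_sub_distrib]
          rw [← Finset.sum_mul, ← Nat.cast_sum, InfinitePlace.sum_mult_eq]
      _ ≤ Module.finrank ℚ K * Real.log R := sub_le_self _ (sum_mult_mul_log_nonneg hy)
  have hdeg : (1 : ℝ) ≤ Module.finrank ℚ K := mod_cast Module.finrank_pos
  have hR0 : 0 ≤ Real.log R :=
    nonneg_of_mul_nonneg_right ((sub_nonneg.2 (hlog w)).trans hdefect) (by linarith)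
  exact abs_le.2 ⟨by linarith, (hlog w).trans (le_mul_of_one_le_left hR0 hdeg)⟩

theorem exists_pow_eq_span_of_pow_eq_one {c : ClassGroup (𝓞 K)} {ℓ : ℕ} (hc : c ^ ℓ = 1) :
    ∃ (𝔟 : (Ideal (𝓞 K))⁰) (γ : 𝓞 K),
      ClassGroup.mk0 𝔟 = c ∧ γ ≠ 0 ∧ (𝔟 : Ideal (𝓞 K)) ^ ℓ = Ideal.span {γ} := by
  obtain ⟨𝔟, rfl⟩ := ClassGroup.mk0_surjective c
  have hinv : ClassGroup.mk0 (𝔟 ^ ℓ) = (ClassGroup.mk0 1)⁻¹ := by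
    rw [map_pow, hc, map_one, inv_one]
  obtain ⟨γ, hγ0, hγ⟩ := ClassGroup.mk0_eq_mk0_inv_iff.1 hinv
  exact ⟨𝔟, γ, rfl, hγ0, by simpa using hγ⟩

theorem exists_mem_mul_forall_lt_mul_rpow {𝔟 𝔭 : Ideal (𝓞 K)} (h𝔟 : 𝔟 ≠ ⊥) (h𝔭 : 𝔭 ≠ ⊥)
    {γ : 𝓞 K} {ℓ : ℕ} (hℓ : ℓ ≠ 0) (hγ : 𝔟 ^ ℓ = Ideal.span {γ}) {T : ℝ} (hT : 0 ≤ T)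
    (h𝔭T : Ideal.absNorm 𝔭 * √((discr K).natAbs : ℝ) < T ^ Module.finrank ℚ K) :
    ∃ x ∈ 𝔟 * 𝔭, x ≠ 0 ∧ ∀ w : InfinitePlace K, w (x : K) < T * w (γ : K) ^ (ℓ : ℝ)⁻¹ := by
  refine exists_ne_zero_mem_ideal_forall_lt (mul_ne_zero h𝔟 h𝔭) (fun w ↦ by positivity) ?_
  have h𝔟0 : (0 : ℝ) < Ideal.absNorm 𝔟 := by
    exact_mod_cast Nat.pos_of_ne_zero (Ideal.absNorm_eq_zero_iff.not.2 h𝔟)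
  simp only [mul_pow, Finset.prod_mul_distrib]
  rw [prod_rpow_pow_mult_eq_absNorm hℓ hγ, Finset.prod_pow_eq_pow_sum,
    InfinitePlace.sum_mult_eq, map_mul, Nat.cast_mul, mul_assoc, mul_comm]
  exact mul_lt_mul_of_pos_right h𝔭T h𝔟0

-- With `𝔟` in the class of `c⁻¹` and `𝔟 ^ ℓ = (γ)`, a short `x ∈ 𝔟𝔭` gives `(x) = 𝔟𝔭𝔞` and
-- `y = x ^ ℓ / γ`.
theorem exists_span_eq_pow_of_pow_eq_one {c : ClassGroup (𝓞 K)} {ℓ : ℕ} (hℓ : ℓ ≠ 0)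
    (hc : c ^ ℓ = 1) (𝔭 : (Ideal (𝓞 K))⁰) {T : ℝ} (hT : 0 ≤ T)
    (h𝔭T : Ideal.absNorm (𝔭 : Ideal (𝓞 K)) * √((discr K).natAbs : ℝ) < T ^ Module.finrank ℚ K) :
    ∃ (𝔞 : (Ideal (𝓞 K))⁰) (y : 𝓞 K), ClassGroup.mk0 (𝔭 * 𝔞) = c ∧
      Ideal.span {y} = (𝔭 * 𝔞 : Ideal (𝓞 K)) ^ ℓ ∧ ∀ w : InfinitePlace K, w (y : K) ≤ T ^ ℓ := by
  obtain ⟨𝔟, γ, h𝔟, hγ0, hγ⟩ := exists_pow_eq_span_of_pow_eq_one (c := c⁻¹)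
    (by rw [inv_pow, hc, inv_one])
  obtain ⟨x, hx𝔟𝔭, hx0, hx⟩ := exists_mem_mul_forall_lt_mul_rpow (nonZeroDivisors.coe_ne_zero 𝔟)
    (nonZeroDivisors.coe_ne_zero 𝔭) hℓ hγ hT h𝔭T
  obtain ⟨𝔞, h𝔞⟩ := Ideal.dvd_span_singleton.2 hx𝔟𝔭
  have h𝔞0 : 𝔞 ≠ 0 := by
    rintro rfl
    exact hx0 (by simpa using h𝔞)
  obtain ⟨y, hy⟩ : γ ∣ x ^ ℓ := by
    rw [← Ideal.mem_span_singleton, ← hγ]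
    exact Ideal.pow_mem_pow (Ideal.mul_le_left hx𝔟𝔭) ℓ
  refine ⟨⟨𝔞, mem_nonZeroDivisors_of_ne_zero h𝔞0⟩, y, ?_, ?_, fun w ↦ ?_⟩
  · rw [← inv_inv c, ← h𝔟, ClassGroup.mk0_eq_mk0_inv_iff]
    exact ⟨x, hx0, by rw [h𝔞, Submonoid.coe_mul, mul_comm, mul_assoc]⟩
  · refine mul_left_cancel₀ (Ideal.span_singleton_eq_bot.not.2 hγ0) ?_
    rw [Ideal.span_singleton_mul_span_singleton, ← hy, ← hγ, ← mul_pow, ← mul_assoc, ← h𝔞,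
      Ideal.span_singleton_pow]
  · have hγpos : 0 < w (γ : K) := InfinitePlace.pos_iff.2 (RingOfIntegers.coe_ne_zero_iff.2 hγ0)
    refine le_of_mul_le_mul_left ?_ hγpos
    calc w (γ : K) * w (y : K)
        = w (x : K) ^ ℓ := by
          rw [← map_mul, ← map_mul, ← hy, map_pow, map_pow]
      _ ≤ (T * w (γ : K) ^ (ℓ : ℝ)⁻¹) ^ ℓ := by
          gcongr
          exact (hx w).le
      _ = w (γ : K) * T ^ ℓ := by
          rw [mul_pow, Real.rpow_inv_natCast_pow hγpos.le hℓ, mul_comm]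

theorem ne_zero_of_span_eq_pow {R : Type*} [CommRing R] [IsDomain R] {I : Ideal R} (hI : I ≠ ⊥)
    {x : R} {ℓ : ℕ} (hx : Ideal.span {x} = I ^ ℓ) : x ≠ 0 := by
  rintro rfl
  exact pow_ne_zero ℓ hI (by simpa using hx.symm)

theorem exists_span_eq_pow_absNorm_le {c : ClassGroup (𝓞 K)} {ℓ : ℕ} (hℓ : ℓ ≠ 0)
    (hc : c ^ ℓ = 1) (𝔭 : (Ideal (𝓞 K))⁰) :
    ∃ (𝔞 : (Ideal (𝓞 K))⁰) (y : 𝓞 K), ClassGroup.mk0 (𝔭 * 𝔞) = c ∧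
      Ideal.span {y} = (𝔭 * 𝔞 : Ideal (𝓞 K)) ^ ℓ ∧
      Ideal.absNorm (𝔞 : Ideal (𝓞 K)) ≤ 2 * √((discr K).natAbs : ℝ) ∧
      ∀ w : InfinitePlace K, |Real.log (w (y : K))| ≤
        ℓ * Real.log (2 * Ideal.absNorm (𝔭 : Ideal (𝓞 K)) * √((discr K).natAbs : ℝ)) := by
  set Y : ℝ := 2 * Ideal.absNorm (𝔭 : Ideal (𝓞 K)) * √((discr K).natAbs : ℝ) with hY
  have h𝔭pos : (0 : ℝ) < Ideal.absNorm (𝔭 : Ideal (𝓞 K)) := by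
    exact_mod_cast Ideal.absNorm_pos_of_nonZeroDivisors 𝔭
  have hDpos : 0 < √((discr K).natAbs : ℝ) :=
    Real.sqrt_pos.2 (by exact_mod_cast Int.natAbs_pos.2 (discr_ne_zero K))
  have hYpos : 0 < Y := by positivity
  have hTn : (Y ^ (Module.finrank ℚ K : ℝ)⁻¹) ^ Module.finrank ℚ K = Y :=
    Real.rpow_inv_natCast_pow hYpos.le Module.finrank_pos.ne'
  set T : ℝ := Y ^ (Module.finrank ℚ K : ℝ)⁻¹
  have hTpos : 0 ≤ T := by positivity
  obtain ⟨𝔞, y, hcl, hspan, hyT⟩ := exists_span_eq_pow_of_pow_eq_one hℓ hc 𝔭 hTpos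
    (by rw [hTn, hY]; nlinarith [mul_pos h𝔭pos hDpos])
  have hy0 : y ≠ 0 := ne_zero_of_span_eq_pow (nonZeroDivisors.coe_ne_zero (𝔭 * 𝔞)) hspan
  refine ⟨𝔞, y, hcl, hspan, ?_, fun w ↦ ?_⟩
  · have hnorm := absNorm_le_pow_finrank hℓ hspan hTpos hyT
    rw [hTn, map_mul, Nat.cast_mul] at hnorm
    refine le_of_mul_le_mul_left (hnorm.trans_eq ?_) h𝔭pos
    rw [hY]; ring
  · calc |Real.log (w (y : K))| ≤ Module.finrank ℚ K * Real.log (T ^ ℓ) :=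
          abs_log_le_finrank_mul_log hy0 hyT w
      _ = ℓ * Real.log (T ^ Module.finrank ℚ K) := by rw [Real.log_pow, Real.log_pow]; ring
      _ = ℓ * Real.log Y := by rw [hTn]

end Minkowski

section Separation

variable {K : Type*} [Field K]

/-- The unit cube of the logarithmic space `InfinitePlace K → ℝ` that contains the archimedean
logarithms of `y ≠ 0`, labelled by its lower corner. -/
noncomputable def logBox (y : 𝓞 K) : InfinitePlace K → ℤ := fun w ↦ ⌊Real.log (w (y : K))⌋

/-- Generators of the `ℓ`-th powers of `𝔭𝔞` and of `𝔮𝔞` always lie in different logarithmic boxes,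
so that the pair (cofactor, box) attached to an `ℓ`-torsion class distinguishes `𝔭` from `𝔮`. -/
def IsSeparated (ℓ : ℕ) (𝔭 𝔮 : Ideal (𝓞 K)) : Prop :=
  ∀ (𝔞 : Ideal (𝓞 K)) (y y' : 𝓞 K), 𝔞 ≠ ⊥ → Ideal.span {y} = (𝔭 * 𝔞) ^ ℓ →
    Ideal.span {y'} = (𝔮 * 𝔞) ^ ℓ → logBox y ≠ logBox y'

theorem div_le_exp_one_of_logBox_eq {y y' : 𝓞 K} (hy : y ≠ 0) (hy' : y' ≠ 0)
    (h : logBox y = logBox y') (w : InfinitePlace K) : w (y / y' : K) ≤ Real.exp 1 := by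
  have hpos {x : 𝓞 K} (hx : x ≠ 0) : 0 < w (x : K) :=
    InfinitePlace.pos_iff.2 (RingOfIntegers.coe_ne_zero_iff.2 hx)
  rw [map_div₀, ← Real.log_le_iff_le_exp (div_pos (hpos hy) (hpos hy')),
    Real.log_div (hpos hy).ne' (hpos hy').ne']
  exact (le_abs_self _).trans (Int.abs_sub_lt_one_of_floor_eq_floor (congr_fun h w)).le

variable [NumberField K]

theorem isSeparated_of_absNorm_pow_mul_lt {𝔭 𝔮 : Ideal (𝓞 K)} (h𝔭 : Prime 𝔭) (h𝔮 : Prime 𝔮)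
    (hne : 𝔭 ≠ 𝔮) (hunr : IsUnramifiedOverRat 𝔭) (hext : ¬ IsExtendedFromProperSubfield 𝔭)
    {ℓ : ℕ} (hℓ : ℓ ≠ 0)
    (h : (Ideal.absNorm 𝔮 : ℝ) ^ (2 * ℓ * (Module.finrank ℚ K - 1)) *
      (2 * Real.exp 1) ^ (Module.finrank ℚ K * (Module.finrank ℚ K - 1)) <
        ((discr K).natAbs : ℝ)) :
    IsSeparated ℓ 𝔭 𝔮 := by
  intro 𝔞 y y' h𝔞 hy hy' hbox
  have hy0 : y ≠ 0 := ne_zero_of_span_eq_pow (mul_ne_zero h𝔭.ne_zero h𝔞) hy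
  have hy'0 : y' ≠ 0 := ne_zero_of_span_eq_pow (mul_ne_zero h𝔮.ne_zero h𝔞) hy'
  have hcross : Ideal.span {y} * 𝔮 ^ ℓ = Ideal.span {y'} * 𝔭 ^ ℓ := by
    rw [hy, hy']; ring
  have hdiscr := natAbs_discr_le_of_adjoin_div_eq_top hy'0
    (adjoin_div_eq_top h𝔭 h𝔮 hne hunr hext hℓ hy'0 hcross) (pow_ne_zero ℓ h𝔮.ne_zero) hcross
    (div_le_exp_one_of_logBox_eq hy0 hy'0 hbox)
  rw [map_pow, Nat.cast_pow, ← pow_mul, ← mul_assoc, mul_comm ℓ 2] at hdiscr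
  exact hdiscr.not_gt h

theorem pow_mul_lt_of_lt_rpow {D N W η : ℝ} {k : ℕ} (hD : 0 < D) (hN : 0 ≤ N) (hW : 0 ≤ W)
    (hη : η * k < 1) (hND : N ≤ D ^ η) (hWD : W ^ (1 - η * k)⁻¹ < D) : N ^ k * W < D := by
  have hW' : W < D ^ (1 - η * k) := by
    rwa [Real.rpow_inv_lt_iff_of_pos hW hD.le (by linarith)] at hWD
  calc N ^ k * W ≤ (D ^ η) ^ k * W := by gcongr
    _ < (D ^ η) ^ k * D ^ (1 - η * k) := by gcongr
    _ = D := by rw [← Real.rpow_mul_natCast hD.le, ← Real.rpow_add hD]; simp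

theorem exists_forall_lt_natAbs_discr_isSeparated (n : ℕ) {ℓ : ℕ} (hℓ : ℓ ≠ 0) {η : ℝ}
    (hη : η * (2 * ℓ * (n - 1) : ℕ) < 1) :
    ∃ D₀ : ℝ, 0 < D₀ ∧ ∀ (K : Type*) [Field K] [NumberField K], Module.finrank ℚ K = n →
      D₀ < ((discr K).natAbs : ℝ) → ∀ 𝔭 𝔮 : Ideal (𝓞 K), Prime 𝔭 → Prime 𝔮 → 𝔭 ≠ 𝔮 →
      IsUnramifiedOverRat 𝔭 → ¬ IsExtendedFromProperSubfield 𝔭 →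
      (Ideal.absNorm 𝔮 : ℝ) ≤ ((discr K).natAbs : ℝ) ^ η → IsSeparated ℓ 𝔭 𝔮 := by
  refine ⟨((2 * Real.exp 1) ^ (n * (n - 1))) ^ (1 - η * (2 * ℓ * (n - 1) : ℕ))⁻¹, by positivity,
    fun K _ _ hK hD 𝔭 𝔮 h𝔭 h𝔮 hne hunr hext hN ↦ ?_⟩
  subst hK
  exact isSeparated_of_absNorm_pow_mul_lt h𝔭 h𝔮 hne hunr hext hℓ
    (pow_mul_lt_of_lt_rpow (lt_trans (by positivity) hD) (by positivity) (by positivity) hη hN hD)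

end Separation

section Counting

variable {K : Type*} [Field K] [NumberField K]

open Finset in
theorem card_le_card_image_mul_pow {α β ι : Type*} [Fintype α] [DecidableEq β] [Fintype ι]
    (f : α → β) (g : α → ι → ℤ) (hinj : ∀ u v, f u = f v → g u = g v → u = v) {m : ℕ}
    (hm : ∀ u i, |g u i| ≤ m) :
    Fintype.card α ≤ #(univ.image f) * (2 * m + 1) ^ Fintype.card ι := by
  classical
  have hmaps : ∀ u ∈ univ,
      (f u, g u) ∈ univ.image f ×ˢ Fintype.piFinset fun _ : ι ↦ Icc (-m : ℤ) m := fun u _ ↦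
    mem_product.2 ⟨mem_image_of_mem f (mem_univ u),
      Fintype.mem_piFinset.2 fun i ↦ mem_Icc.2 (abs_le.1 (hm u i))⟩
  have hcard := card_le_card_of_injOn (fun u ↦ (f u, g u)) hmaps fun u _ v _ huv ↦
    hinj u v (congr_arg Prod.fst huv) (congr_arg Prod.snd huv)
  rw [card_product, Fintype.card_piFinset, prod_const, Int.card_Icc, card_univ, card_univ] at hcard
  rwa [show ((m : ℤ) + 1 - -m).toNat = 2 * m + 1 by omega] at hcard

theorem card_infinitePlace_le_finrank :
    Fintype.card (InfinitePlace K) ≤ Module.finrank ℚ K := by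
  rw [← InfinitePlace.sum_mult_eq (K := K), Fintype.card_eq_sum_ones]
  exact Finset.sum_le_sum fun w _ ↦ InfinitePlace.mult_pos

theorem abs_floor_le_natCeil {x L : ℝ} (h : |x| ≤ L) : |⌊x⌋| ≤ (⌈L⌉₊ : ℤ) := by
  have hL : L ≤ ((⌈L⌉₊ : ℤ) : ℝ) := mod_cast Nat.le_ceil L
  obtain ⟨hlower, hupper⟩ := abs_le.1 (h.trans hL)
  refine abs_le.2 ⟨Int.le_floor.2 (by simpa using hlower), ?_⟩
  exact_mod_cast (Int.floor_le x).trans hupper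

theorem one_le_natAbs_discr : (1 : ℝ) ≤ ((discr K).natAbs : ℝ) := by
  exact_mod_cast Int.natAbs_pos.2 (discr_ne_zero K)

-- `f` picks a cofactor `𝔞` of `𝔭 j` in an ideal of class `c`, and `g` the box of a generator of the
-- `ℓ`-th power of that ideal.
theorem exists_cofactor_logBox_injective {ℓ : ℕ} (hℓ : ℓ ≠ 0) {ι : Type*}
    (𝔭 : ι → (Ideal (𝓞 K))⁰)
    (hsep : Pairwise fun i j ↦ IsSeparated ℓ (𝔭 i : Ideal (𝓞 K)) (𝔭 j)) {L : ℝ}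
    (h𝔭L : ∀ j, ℓ * Real.log (2 * Ideal.absNorm (𝔭 j : Ideal (𝓞 K)) *
      √((discr K).natAbs : ℝ)) ≤ L) :
    ∃ (f : {c : ClassGroup (𝓞 K) // c ^ ℓ = 1} × ι → Ideal (𝓞 K))
      (g : {c : ClassGroup (𝓞 K) // c ^ ℓ = 1} × ι → InfinitePlace K → ℤ),
      (∀ u, f u ≠ ⊥ ∧ (Ideal.absNorm (f u) : ℝ) ≤ 2 * √((discr K).natAbs : ℝ)) ∧
      (∀ u w, |g u w| ≤ ⌈L⌉₊) ∧ ∀ u v, f u = f v → g u = g v → u = v := by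
  choose 𝔞 y hclass hspan hnorm hlog using
    fun u : {c : ClassGroup (𝓞 K) // c ^ ℓ = 1} × ι ↦
      exists_span_eq_pow_absNorm_le hℓ u.1.2 (𝔭 u.2)
  refine ⟨fun u ↦ 𝔞 u, fun u ↦ logBox (y u),
    fun u ↦ ⟨nonZeroDivisors.coe_ne_zero _, hnorm u⟩,
    fun u w ↦ abs_floor_le_natCeil ((hlog u w).trans (h𝔭L u.2)),
    fun u v (h𝔞 : (𝔞 u : Ideal (𝓞 K)) = 𝔞 v) hbox ↦ ?_⟩
  have hindex : u.2 = v.2 := by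
    by_contra hne
    exact hsep hne _ _ _ (nonZeroDivisors.coe_ne_zero _) (hspan u) (h𝔞 ▸ hspan v) hbox
  refine Prod.ext (Subtype.ext ?_) hindex
  rw [← hclass u, ← hclass v, hindex, Subtype.ext h𝔞]

theorem clTor_mul_card_le {ℓ : ℕ} (hℓ : ℓ ≠ 0) {ι : Type*} [Fintype ι]
    (𝔭 : ι → (Ideal (𝓞 K))⁰)
    (hsep : Pairwise fun i j ↦ IsSeparated ℓ (𝔭 i : Ideal (𝓞 K)) (𝔭 j)) {L : ℝ} (hL : 0 ≤ L)
    (h𝔭L : ∀ j, ℓ * Real.log (2 * Ideal.absNorm (𝔭 j : Ideal (𝓞 K)) *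
      √((discr K).natAbs : ℝ)) ≤ L) {s : ℝ} (hs : 1 < s) :
    (clTor K ℓ * Fintype.card ι : ℝ) ≤
      (∑' m : ℕ, 1 / (m : ℝ) ^ s) ^ Module.finrank ℚ K * (2 * √((discr K).natAbs : ℝ)) ^ s *
        (2 * L + 3) ^ Module.finrank ℚ K := by
  classical
  have : Fintype {c : ClassGroup (𝓞 K) // c ^ ℓ = 1} := Fintype.ofFinite _
  obtain ⟨f, g, hf, hg, hinj⟩ := exists_cofactor_logBox_injective hℓ 𝔭 hsep h𝔭L
  have hpairs : clTor K ℓ * Fintype.card ι ≤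
      (Finset.univ.image f).card * (2 * ⌈L⌉₊ + 1) ^ Fintype.card (InfinitePlace K) := by
    rw [clTor, Nat.card_eq_fintype_card, ← Fintype.card_prod]
    exact card_le_card_image_mul_pow f g hinj hg
  have hideals : ((Finset.univ.image f).card : ℝ) ≤
      (∑' m : ℕ, 1 / (m : ℝ) ^ s) ^ Module.finrank ℚ K *
        (2 * √((discr K).natAbs : ℝ)) ^ s := by
    refine card_ideals_le (by positivity) (fun I hI ↦ ?_) hs
    obtain ⟨u, -, rfl⟩ := Finset.mem_image.1 hI
    exact hf u
  have hboxes : (2 * ⌈L⌉₊ + 1 : ℝ) ^ Fintype.card (InfinitePlace K) ≤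
      (2 * L + 3) ^ Module.finrank ℚ K := by
    have hceil : (2 * ⌈L⌉₊ + 1 : ℝ) ≤ 2 * L + 3 := by linarith [Nat.ceil_lt_add_one hL]
    exact (pow_le_pow_left₀ (by positivity) hceil _).trans
      (pow_le_pow_right₀ (by linarith) card_infinitePlace_le_finrank)
  calc (clTor K ℓ * Fintype.card ι : ℝ)
      ≤ (Finset.univ.image f).card * (2 * ⌈L⌉₊ + 1) ^ Fintype.card (InfinitePlace K) := by
        exact_mod_cast hpairs
    _ ≤ _ := mul_le_mul hideals hboxes (by positivity) (by positivity)

theorem exists_add_mul_log_pow_le_mul_rpow {a b δ : ℝ} (ha : 0 ≤ a) (hb : 0 ≤ b) (hδ : 0 < δ)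
    (n : ℕ) : ∃ C : ℝ, 0 < C ∧ ∀ x : ℝ, 1 ≤ x → (a + b * Real.log x) ^ n ≤ C * x ^ δ := by
  set κ : ℝ := δ / (n + 1) with hκ
  have hκ0 : 0 < κ := by positivity
  have hκn : κ * n ≤ δ := by
    rw [hκ, div_mul_eq_mul_div, div_le_iff₀ (by positivity)]
    linarith
  refine ⟨(a + 1 + b / κ) ^ n, by positivity, fun x hx ↦ ?_⟩
  have hlog0 : 0 ≤ Real.log x := Real.log_nonneg hx
  have hlog : a + b * Real.log x ≤ (a + 1 + b / κ) * x ^ κ := by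
    calc a + b * Real.log x ≤ (a + 1) * 1 + b * (x ^ κ / κ) := by
          gcongr
          · linarith
          · exact Real.log_le_rpow_div (by linarith) hκ0
      _ ≤ (a + 1) * x ^ κ + b * (x ^ κ / κ) := by
          gcongr
          exact Real.one_le_rpow hx hκ0.le
      _ = (a + 1 + b / κ) * x ^ κ := by ring
  calc (a + b * Real.log x) ^ n ≤ ((a + 1 + b / κ) * x ^ κ) ^ n := by gcongr
    _ = (a + 1 + b / κ) ^ n * x ^ (κ * n) := by
        rw [mul_pow, Real.rpow_mul_natCast (by linarith)]
    _ ≤ (a + 1 + b / κ) ^ n * x ^ δ := by gcongr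

theorem log_two_mul_mul_sqrt_le {N D : ℝ} (hN : 0 < N) (hND : N ≤ D) (hD : 1 ≤ D) :
    Real.log (2 * N * √D) ≤ Real.log 2 + 2 * Real.log D := by
  have hD0 : 0 < D := hN.trans_le hND
  rw [two_mul (Real.log D), ← add_assoc, ← Real.log_mul two_ne_zero hD0.ne',
    ← Real.log_mul (by positivity) hD0.ne']
  gcongr
  exact Real.sqrt_le_self_iff.2 (Or.inr hD)

theorem exists_clTor_mul_card_le (n : ℕ) {ℓ : ℕ} (hℓ : ℓ ≠ 0) {ε : ℝ} (hε : 0 < ε) :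
    ∃ C : ℝ, 0 < C ∧ ∀ (K : Type*) [Field K] [NumberField K], Module.finrank ℚ K = n →
      ∀ (ι : Type*) [Fintype ι] (𝔭 : ι → (Ideal (𝓞 K))⁰),
      (∀ j, (Ideal.absNorm (𝔭 j : Ideal (𝓞 K)) : ℝ) ≤ ((discr K).natAbs : ℝ)) →
      (Pairwise fun i j ↦ IsSeparated ℓ (𝔭 i : Ideal (𝓞 K)) (𝔭 j)) →
      (clTor K ℓ * Fintype.card ι : ℝ) ≤ C * ((discr K).natAbs : ℝ) ^ ((1 : ℝ) / 2 + ε) := by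
  obtain ⟨C, hC, hlog⟩ := exists_add_mul_log_pow_le_mul_rpow (a := 2 * (ℓ * Real.log 2) + 3)
    (b := 4 * ℓ) (by positivity) (by positivity) (half_pos hε) n
  have hζ : 0 < ∑' m : ℕ, 1 / (m : ℝ) ^ (1 + ε) :=
    (Real.summable_one_div_nat_rpow.2 (by linarith)).tsum_pos (fun _ ↦ by positivity) 1 (by simp)
  set ζ := ∑' m : ℕ, 1 / (m : ℝ) ^ (1 + ε)
  refine ⟨ζ ^ n * 2 ^ (1 + ε) * C, by positivity, fun K _ _ hK ι _ 𝔭 hN hsep ↦ ?_⟩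
  have hD := one_le_natAbs_discr (K := K)
  set D : ℝ := ((discr K).natAbs : ℝ)
  have hD0 : 0 < D := by linarith
  have : 0 ≤ Real.log D := Real.log_nonneg hD
  have hheight (j) : ℓ * Real.log (2 * Ideal.absNorm (𝔭 j : Ideal (𝓞 K)) * √D) ≤
      ℓ * (Real.log 2 + 2 * Real.log D) := by
    gcongr
    exact log_two_mul_mul_sqrt_le
      (by exact_mod_cast Ideal.absNorm_pos_of_nonZeroDivisors (𝔭 j)) (hN j) hD
  calc (clTor K ℓ * Fintype.card ι : ℝ)
      ≤ ζ ^ n * (2 * √D) ^ (1 + ε) * (2 * (ℓ * (Real.log 2 + 2 * Real.log D)) + 3) ^ n :=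
        hK ▸ clTor_mul_card_le hℓ 𝔭 hsep (by positivity) hheight (by linarith)
    _ = ζ ^ n * (2 ^ (1 + ε) * D ^ ((1 + ε) / 2)) *
          (2 * (ℓ * Real.log 2) + 3 + 4 * ℓ * Real.log D) ^ n := by
        rw [Real.mul_rpow two_pos.le (by positivity), Real.sqrt_eq_rpow, ← Real.rpow_mul hD0.le]
        ring_nf
    _ ≤ ζ ^ n * (2 ^ (1 + ε) * D ^ ((1 + ε) / 2)) * (C * D ^ (ε / 2)) := by
        gcongr
        exact hlog D hD
    _ = ζ ^ n * 2 ^ (1 + ε) * C * D ^ ((1 : ℝ) / 2 + ε) := by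
        rw [show (1 : ℝ) / 2 + ε = (1 + ε) / 2 + ε / 2 by ring, Real.rpow_add hD0]
        ring

theorem exists_card_le_of_natAbs_discr_le (n : ℕ) {D₀ : ℝ} (hD₀ : 0 ≤ D₀) :
    ∃ B : ℝ, 0 ≤ B ∧ ∀ (K : Type*) [Field K] [NumberField K], Module.finrank ℚ K = n →
      ((discr K).natAbs : ℝ) ≤ D₀ → ∀ (ι : Type*) [Fintype ι] (𝔭 : ι → (Ideal (𝓞 K))⁰),
      Function.Injective 𝔭 →
      (∀ j, (Ideal.absNorm (𝔭 j : Ideal (𝓞 K)) : ℝ) ≤ ((discr K).natAbs : ℝ)) →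
      (Fintype.card ι : ℝ) ≤ B := by
  classical
  refine ⟨(∑' m : ℕ, 1 / (m : ℝ) ^ (2 : ℝ)) ^ n * D₀ ^ (2 : ℝ), by positivity,
    fun K _ _ hK hD ι _ 𝔭 hinj hN ↦ ?_⟩
  have hcard := card_ideals_le (S := Finset.univ.image fun j ↦ (𝔭 j : Ideal (𝓞 K))) hD₀
    (fun I hI ↦ ?_) one_lt_two
  · have hinj' : Function.Injective fun j ↦ (𝔭 j : Ideal (𝓞 K)) :=
      Subtype.val_injective.comp hinj
    rwa [Finset.card_image_of_injective _ hinj', Finset.card_univ, hK] at hcard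
  · obtain ⟨j, -, rfl⟩ := Finset.mem_image.1 hI
    exact ⟨nonZeroDivisors.coe_ne_zero _, (hN j).trans hD⟩

end Counting

theorem mul_natCast_lt_one_of_lt_one_div {n ℓ : ℕ} (hn : 2 ≤ n) (hℓ : ℓ ≠ 0) {η : ℝ}
    (hη : η < 1 / (2 * (ℓ : ℝ) * ((n : ℝ) - 1))) : η * (2 * ℓ * (n - 1) : ℕ) < 1 := by
  have hcast : ((2 * ℓ * (n - 1) : ℕ) : ℝ) = 2 * (ℓ : ℝ) * ((n : ℝ) - 1) := by
    push_cast [Nat.cast_sub (show 1 ≤ n by omega)]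
    rfl
  have hpos : 0 < 2 * ℓ * (n - 1) := by
    have : 0 < n - 1 := by omega
    positivity
  rw [← hcast] at hη
  exact (lt_div_iff₀ (by exact_mod_cast hpos)).1 hη

theorem lt_one_of_mul_natCast_lt_one {η : ℝ} {k : ℕ} (h : η * k < 1) (hk : k ≠ 0) : η < 1 := by
  have hk1 : (1 : ℝ) ≤ k := by exact_mod_cast Nat.one_le_iff_ne_zero.2 hk
  by_contra! hη
  nlinarith

/-- **Ellenberg–Venkatesh criterion.** Fix a degree `n ≥ 2`, an integer `ℓ ≥ 2`, a real
`η < 1/(2ℓ(n-1))`, and `ε > 0`. There is a constant `C = C(n,ℓ,η,ε)` such that: if `K/ℚ`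
has degree `n` and `𝔭₁, …, 𝔭_M` are `M` distinct prime ideals of `𝓞 K`, each of absolute
norm `< D_K^η`, each unramified in `K/ℚ`, and none an extension of a prime ideal from a
proper subfield of `K`, then `|Cl_K[ℓ]| ≤ C · D_K^{1/2+ε} · M⁻¹`. -/
theorem ellenberg_venkatesh_criterion (n : ℕ) (hn : 2 ≤ n) (ℓ : ℕ) (hℓ : 2 ≤ ℓ)
    (η : ℝ) (hη : η < 1 / (2 * (ℓ : ℝ) * ((n : ℝ) - 1))) (ε : ℝ) (hε : 0 < ε) :
    ∃ C : ℝ, 0 < C ∧ ∀ (K : Type) [Field K] [NumberField K],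
      Module.finrank ℚ K = n →
      ∀ (M : ℕ), 0 < M → ∀ 𝔭 : Fin M → Ideal (𝓞 K),
      Function.Injective 𝔭 →
      (∀ j, (𝔭 j).IsPrime) →
      (∀ j, (Ideal.absNorm (𝔭 j) : ℝ) < ((NumberField.discr K).natAbs : ℝ) ^ η) →
      (∀ j, ∀ q : ℕ, q.Prime → (q : 𝓞 K) ∈ 𝔭 j →
        ¬ (𝔭 j) ^ 2 ∣ Ideal.span {(q : 𝓞 K)}) →
      (∀ j, ¬ ∃ K₀ : IntermediateField ℚ K, K₀ ≠ ⊤ ∧ ∃ 𝔭₀ : Ideal (𝓞 K₀),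
        𝔭₀.IsPrime ∧ Ideal.map (algebraMap (𝓞 K₀) (𝓞 K)) 𝔭₀ = 𝔭 j) →
      (clTor K ℓ : ℝ) ≤
        C * ((NumberField.discr K).natAbs : ℝ) ^ ((1 : ℝ) / 2 + ε) * (M : ℝ)⁻¹ := by
  have hℓ0 : ℓ ≠ 0 := by omega
  have hηk := mul_natCast_lt_one_of_lt_one_div hn hℓ0 hη
  have hη1 : η < 1 := lt_one_of_mul_natCast_lt_one hηk (Nat.mul_ne_zero (by omega) (by omega))
  obtain ⟨D₀, hD₀, hsep⟩ := exists_forall_lt_natAbs_discr_isSeparated n hℓ0 hηk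
  obtain ⟨C, hC, hcount⟩ := exists_clTor_mul_card_le n hℓ0 hε
  obtain ⟨B, hB, hfew⟩ := exists_card_le_of_natAbs_discr_le n hD₀.le
  refine ⟨C * (1 + B), by positivity, fun K _ _ hK M hM 𝔭 hinj hprime hN hunr hext ↦ ?_⟩
  have h𝔭0 (j) : 𝔭 j ≠ ⊥ := ne_bot_of_not_isExtendedFromProperSubfield (hK ▸ hn) (hext j)
  have h𝔭 (j) : Prime (𝔭 j) := Ideal.prime_of_isPrime (h𝔭0 j) (hprime j)
  let 𝔮 (j : Fin M) : (Ideal (𝓞 K))⁰ := ⟨𝔭 j, mem_nonZeroDivisors_of_ne_zero (h𝔭0 j)⟩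
  have hND (j) : (Ideal.absNorm (𝔭 j) : ℝ) ≤ ((discr K).natAbs : ℝ) :=
    (hN j).le.trans (Real.rpow_le_self_of_one_le one_le_natAbs_discr hη1.le)
  rw [← div_eq_mul_inv, le_div_iff₀ (by exact_mod_cast hM), mul_right_comm]
  rcases le_or_gt ((discr K).natAbs : ℝ) D₀ with hD | hD
  · have hM' : (M : ℝ) ≤ B := by
      simpa using hfew K hK hD (Fin M) 𝔮 (fun i j h ↦ hinj (congr_arg Subtype.val h)) hND
    have hone := hcount K hK Unit (fun _ ↦ 𝔮 ⟨0, hM⟩) (fun _ ↦ hND _) (fun i j h ↦ absurd rfl h)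
    rw [Fintype.card_unit, Nat.cast_one, mul_one] at hone
    exact mul_le_mul hone (hM'.trans (by linarith)) (by positivity) (by positivity)
  · have hall := hcount K hK (Fin M) 𝔮 hND fun i j hij ↦ hsep K hK hD _ _ (h𝔭 i) (h𝔭 j)
      (hinj.ne hij) (hunr i) (hext i) (hN j).le
    rw [Fintype.card_fin] at hall
    exact hall.trans (le_mul_of_one_le_right (by positivity) (by linarith))
end
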